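/- Summable convergence of the alternating minimization algorithm (Proposition 1): if (U^{(k)})_{k≥0} and (V^{(k)})_{k≥0} are alternating-minimization iterates for f, then ∑_{k=0}^{∞} (‖U^{(k+1)} − U^{(k)}‖_F + ‖V^{(k+1)} − V^{(k)}‖_F) < +∞. -/

import Mathlib

open Finset Matrix

/-- Squared Frobenius norm: `frobSq X = ‖X‖_F²`. -/
noncomputable def frobSq {a b : ℕ} (X : Matrix (Fin a) (Fin b) ℝ) : ℝ :=
  ∑ i, ∑ j, (X i j) ^ 2

/-- The matrix-completion objective
`f(U,V) = (1/2)(‖U‖_F² + ‖V‖_F²) + (μ/2) ∑_{(i,j)∈Ω} ((UV − M)_{ij})² + (ν/2) ‖L(UV) − b‖²`. -/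
noncomputable def objF {m n r p : ℕ} (Ω : Finset (Fin m × Fin n)) (M : Matrix (Fin m) (Fin n) ℝ)
    (L : Matrix (Fin m) (Fin n) ℝ →ₗ[ℝ] EuclideanSpace ℝ (Fin p))
    (b : EuclideanSpace ℝ (Fin p)) (μ ν : ℝ)
    (U : Matrix (Fin m) (Fin r) ℝ) (V : Matrix (Fin r) (Fin n) ℝ) : ℝ :=
  (1 / 2) * (frobSq U + frobSq V)
    + (μ / 2) * ∑ ij ∈ Ω, ((U * V - M) ij.1 ij.2) ^ 2
    + (ν / 2) * ‖L (U * V) - b‖ ^ 2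

set_option linter.unusedSectionVars false

section LojasiewiczPart

open Polynomial

lemma formallySmooth_of_charZero (L K : Type*) [Field L] [Field K] [Algebra L K] [CharZero L] :
    Algebra.FormallySmooth L K := by
  obtain ⟨s, hs⟩ := exists_isTranscendenceBasis L K
  have : Algebra.IsAlgebraic (IntermediateField.adjoin L (Set.range ((↑) : s → K))) K :=
    hs.isAlgebraic_field
  exact .of_algebraicIndependent_of_isSeparable hs.1

lemma exists_derivation_transcendental {E K : Type*} [Field E] [Field K] [Algebra E K] [CharZero E]
    (y : K) (hy : Transcendental E y) : ∃ d : Derivation E K K, d y = 1 := by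
  let : Algebra E[X] K := (aeval (R := E) y).toAlgebra
  have hmap : ∀ q : E[X], algebraMap E[X] K q = aeval y q := fun q => rfl
  have : IsScalarTower E E[X] K := IsScalarTower.of_algebraMap_eq (fun e => by
    rw [hmap]; simp)
  have : FaithfulSMul E[X] K := (faithfulSMul_iff_algebraMap_injective _ _).2
    (transcendental_iff_injective.1 hy)
  let : Algebra (FractionRing E[X]) K := FractionRing.liftAlgebra E[X] K
  have : IsScalarTower E[X] (FractionRing E[X]) K := FractionRing.isScalarTower_liftAlgebra E[X] K
  have : CharZero (FractionRing E[X]) := inferInstance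
  have := formallySmooth_of_charZero (FractionRing E[X]) K
  have : Algebra.FormallySmooth E[X] (FractionRing E[X]) :=
    .of_isLocalization (nonZeroDivisors E[X])
  have : Algebra.FormallySmooth E[X] K := .comp _ (FractionRing E[X]) _
  let B := TrivSqZeroExt K K
  let φ : E[X] →ₐ[E] B := aeval (TrivSqZeroExt.inl y + TrivSqZeroExt.inr 1)
  let : Algebra E[X] B := φ.toAlgebra
  have hB : ∀ q : E[X], algebraMap E[X] B q = φ q := fun q => rfl
  let g0 : B →ₐ[E] K := TrivSqZeroExt.fstHom E K K
  have hg0 : ∀ q : E[X], g0 (φ q) = aeval y q := by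
    intro q
    have : g0.comp φ = aeval y := by
      apply Polynomial.algHom_ext
      change g0 (aeval (TrivSqZeroExt.inl y + TrivSqZeroExt.inr 1) X) = aeval y X
      rw [aeval_X, aeval_X]
      change TrivSqZeroExt.fst (TrivSqZeroExt.inl y + TrivSqZeroExt.inr (1 : K)) = y
      rw [TrivSqZeroExt.fst_add, TrivSqZeroExt.fst_inl, TrivSqZeroExt.fst_inr, add_zero]
    exact DFunLike.congr_fun this q
  let g : B →ₐ[E[X]] K := { g0 with commutes' := fun q => hg0 q }
  have hgs : Function.Surjective g := fun x => ⟨TrivSqZeroExt.inl x, rfl⟩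
  have hgn : IsNilpotent (RingHom.ker (g : B →+* K)) := by
    refine ⟨2, ?_⟩
    refine (sq (RingHom.ker (g : B →+* K))).trans ?_
    rw [Ideal.zero_eq_bot, eq_bot_iff, Ideal.mul_le]
    intro r hr s hs
    have hr' : r.fst = 0 := hr
    have hs' : s.fst = 0 := hs
    rw [Ideal.mem_bot]
    apply TrivSqZeroExt.ext
    · rw [TrivSqZeroExt.fst_mul, hr', zero_mul]; rfl
    · rw [TrivSqZeroExt.snd_mul, hr', hs', zero_smul]
      simp
  let l := Algebra.FormallySmooth.liftOfSurjective (AlgHom.id E[X] K) g hgs hgn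
  have hl : ∀ x, (l x).fst = x := fun x =>
    Algebra.FormallySmooth.liftOfSurjective_apply (AlgHom.id E[X] K) g hgs hgn x
  have hlE : ∀ e : E, l (algebraMap E K e) = algebraMap E B e := by
    intro e
    have := l.commutes (C e)
    rw [hmap, hB] at this
    simpa [φ] using this
  have hly : l y = TrivSqZeroExt.inl y + TrivSqZeroExt.inr 1 := by
    have := l.commutes X
    rw [hmap, hB] at this
    simpa [φ] using this
  refine ⟨Derivation.mk' { toFun := fun x => (l x).snd, map_add' := fun a b => by rw [map_add]; exact TrivSqZeroExt.snd_add _ _, map_smul' := ?_ } ?_, ?_⟩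
  · intro e x
    simp only [Algebra.smul_def, map_mul, hlE, RingHom.id_apply]
    have h1 : (algebraMap E B e).snd = 0 := rfl
    have h2 : (algebraMap E B e).fst = algebraMap E K e := rfl
    rw [TrivSqZeroExt.snd_mul, h1, h2]
    simp
  · intro a b
    change (l (a * b)).snd = a • (l b).snd + b • (l a).snd
    rw [map_mul, TrivSqZeroExt.snd_mul, hl, hl]
    simp [mul_comm]
  · change (l y).snd = 1
    rw [hly, TrivSqZeroExt.snd_add, TrivSqZeroExt.snd_inl, TrivSqZeroExt.snd_inr, zero_add]

/-- `y` is good for the derivation `D` if `D y / y` has residue `-log N y`. -/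
def GoodFor {K : Type*} [Field K] [Algebra ℝ K] (N : AbsoluteValue K ℝ) (D : Derivation ℝ K K)
    (y : K) : Prop :=
  y ≠ 0 → N (D y - algebraMap ℝ K (-Real.log (N y)) * y) < N y

section good

variable {K : Type*} [Field K] [Algebra ℝ K] {N : AbsoluteValue K ℝ} {D : Derivation ℝ K K}

lemma na_sub (hna : IsNonarchimedean N) {a b : K} {r : ℝ} (ha : N a < r) (hb : N b < r) :
    N (a - b) < r := by
  rw [sub_eq_add_neg]
  refine lt_of_le_of_lt (hna _ _) (max_lt ha ?_)
  rwa [N.map_neg]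

lemma na_add (hna : IsNonarchimedean N) {a b : K} {r : ℝ} (ha : N a < r) (hb : N b < r) :
    N (a + b) < r :=
  lt_of_le_of_lt (hna _ _) (max_lt ha hb)

lemma na_add_le (hna : IsNonarchimedean N) {a b : K} {r : ℝ} (ha : N a ≤ r) (hb : N b ≤ r) :
    N (a + b) ≤ r :=
  le_trans (hna _ _) (max_le ha hb)

lemma na_sub_le (hna : IsNonarchimedean N) {a b : K} {r : ℝ} (ha : N a ≤ r) (hb : N b ≤ r) :
    N (a - b) ≤ r := by
  rw [sub_eq_add_neg]
  refine le_trans (hna _ _) (max_le ha ?_)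
  rwa [N.map_neg]

lemma na_sum (hna : IsNonarchimedean N) {ι : Type*} (s : Finset ι) (f : ι → K) {r : ℝ}
    (hr : 0 < r) (h : ∀ i ∈ s, N (f i) < r) : N (∑ i ∈ s, f i) < r := by
  classical
  induction s using Finset.induction_on with
  | empty => simpa using hr
  | insert a s ha ih =>
    rw [Finset.sum_insert ha]
    exact na_add hna (h _ (Finset.mem_insert_self _ _))
      (ih fun i hi => h i (Finset.mem_insert_of_mem hi))

lemma na_sum_le (hna : IsNonarchimedean N) {ι : Type*} (s : Finset ι) (f : ι → K) {r : ℝ}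
    (hr : 0 ≤ r) (h : ∀ i ∈ s, N (f i) ≤ r) : N (∑ i ∈ s, f i) ≤ r := by
  classical
  induction s using Finset.induction_on with
  | empty => simpa using hr
  | insert a s ha ih =>
    rw [Finset.sum_insert ha]
    exact na_add_le hna (h _ (Finset.mem_insert_self _ _))
      (ih fun i hi => h i (Finset.mem_insert_of_mem hi))

lemma N_const_mul_le (hc : ∀ r : ℝ, N (algebraMap ℝ K r) ≤ 1) (r : ℝ) (y : K) :
    N (algebraMap ℝ K r * y) ≤ N y := by
  rw [N.map_mul]
  exact mul_le_of_le_one_left (N.nonneg _) (hc r)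

lemma N_const (hc : ∀ r : ℝ, N (algebraMap ℝ K r) ≤ 1) {r : ℝ} (hr : r ≠ 0) :
    N (algebraMap ℝ K r) = 1 := by
  refine le_antisymm (hc r) ?_
  have h1 : N (algebraMap ℝ K r) * N (algebraMap ℝ K r⁻¹) = 1 := by
    rw [← N.map_mul, ← map_mul, mul_inv_cancel₀ hr, map_one, N.map_one]
  have h2 := mul_le_of_le_one_right (N.nonneg (algebraMap ℝ K r)) (hc r⁻¹)
  linarith

lemma good_const (hc : ∀ r : ℝ, N (algebraMap ℝ K r) ≤ 1) (r : ℝ) :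
    GoodFor N D (algebraMap ℝ K r) := by
  intro h
  have hr : r ≠ 0 := by rintro rfl; simp at h
  rw [N_const hc hr]
  simp

lemma GoodFor.mul (hna : IsNonarchimedean N) {a b : K} (ha : GoodFor N D a) (hb : GoodFor N D b) :
    GoodFor N D (a * b) := by
  intro h
  have ha0 : a ≠ 0 := left_ne_zero_of_mul h
  have hb0 : b ≠ 0 := right_ne_zero_of_mul h
  have h1 := ha ha0
  have h2 := hb hb0
  have ea := N.pos ha0
  have eb := N.pos hb0
  have : D (a * b) - algebraMap ℝ K (-Real.log (N (a * b))) * (a * b)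
      = a * (D b - algebraMap ℝ K (-Real.log (N b)) * b)
        + b * (D a - algebraMap ℝ K (-Real.log (N a)) * a) := by
    rw [N.map_mul, Real.log_mul ea.ne' eb.ne', D.leibniz]
    simp only [smul_eq_mul, neg_add, map_add]
    ring
  rw [this, N.map_mul]
  apply na_add hna
  · rw [N.map_mul]; exact mul_lt_mul_of_pos_left h2 ea
  · rw [N.map_mul, mul_comm]; exact mul_lt_mul_of_pos_right h1 eb

lemma GoodFor.inv {a : K} (ha : GoodFor N D a) : GoodFor N D a⁻¹ := by
  intro h
  have ha0 : a ≠ 0 := by simpa using h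
  have h1 := ha ha0
  have ea := N.pos ha0
  have : D a⁻¹ - algebraMap ℝ K (-Real.log (N a⁻¹)) * a⁻¹
      = - (a⁻¹ ^ 2) * (D a - algebraMap ℝ K (-Real.log (N a)) * a) := by
    rw [map_inv₀ N, Real.log_inv, D.leibniz_inv]
    simp only [smul_eq_mul, map_neg]
    field_simp
    ring
  rw [this, N.map_mul, N.map_neg, map_pow, map_inv₀ N]
  have h3 : (N a)⁻¹ = (N a)⁻¹ ^ 2 * N a := by field_simp
  conv_rhs => rw [h3]
  exact mul_lt_mul_of_pos_left h1 (by positivity)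

lemma GoodFor.N_D_le (hna : IsNonarchimedean N) (hc : ∀ r : ℝ, N (algebraMap ℝ K r) ≤ 1)
    {a : K} (ha : GoodFor N D a) : N (D a) ≤ N a := by
  by_cases h : a = 0
  · simp [h]
  have : D a = (D a - algebraMap ℝ K (-Real.log (N a)) * a)
    + algebraMap ℝ K (-Real.log (N a)) * a := by ring
  rw [this]
  exact na_add_le hna (ha h).le (N_const_mul_le hc _ _)

lemma GoodFor.add_dom (hna : IsNonarchimedean N) (hc : ∀ r : ℝ, N (algebraMap ℝ K r) ≤ 1)
    {a b : K} (ha : GoodFor N D a) (hb : N (D b) < N a) (hab : N b < N a) :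
    GoodFor N D (a + b) := by
  intro h
  have ha0 : a ≠ 0 := by
    rintro rfl
    rw [N.map_zero] at hab
    exact absurd hab (not_lt.2 (N.nonneg _))
  have hN : N (a + b) = N a := hna.add_eq_left_of_lt hab
  rw [hN]
  have : D (a + b) - algebraMap ℝ K (-Real.log (N a)) * (a + b)
      = (D a - algebraMap ℝ K (-Real.log (N a)) * a) +
        (D b - algebraMap ℝ K (-Real.log (N a)) * b) := by rw [map_add]; ring
  rw [this]
  exact na_add hna (ha ha0)
    (na_sub hna hb (lt_of_le_of_lt (N_const_mul_le hc _ _) hab))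

lemma good_multiset_prod (hna : IsNonarchimedean N) (hc : ∀ r : ℝ, N (algebraMap ℝ K r) ≤ 1)
    (s : Multiset K) (h : ∀ a ∈ s, GoodFor N D a) : GoodFor N D s.prod := by
  induction s using Multiset.induction_on with
  | empty => simpa using good_const (D := D) hc 1
  | cons a s ih =>
    rw [Multiset.prod_cons]
    exact (h _ (Multiset.mem_cons_self _ _)).mul hna
      (ih fun b hb => h b (Multiset.mem_cons_of_mem hb))

lemma gauss_prod (hna : IsNonarchimedean N) (y : K) (s : Multiset K)
    (h : ∀ b ∈ s, N y ≤ N (y - b)) (i : ℕ) :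
    N ((s.map (fun b => X - C b)).prod.coeff i) * N y ^ i
      ≤ N ((s.map (fun b => X - C b)).prod.eval y) := by
  induction s using Multiset.induction_on generalizing i with
  | empty =>
    simp only [Multiset.map_zero, Multiset.prod_zero, coeff_one, eval_one]
    split_ifs with hi
    · subst hi; simp
    · simp
  | cons b s ih =>
    have ih' := ih (fun c hc => h c (Multiset.mem_cons_of_mem hc))
    have hb := h b (Multiset.mem_cons_self _ _)
    have hNb : N b ≤ N (y - b) := by
      have : b = y - (y - b) := by ring
      rw [this]
      simpa using na_sub_le hna hb le_rfl
    rw [Multiset.map_cons, Multiset.prod_cons, eval_mul]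
    set Q := (s.map (fun b => X - C b)).prod with hQ
    simp only [eval_sub, eval_X, eval_C, N.map_mul]
    rw [sub_mul, coeff_sub, coeff_C_mul]
    rw [← map_pow, ← N.map_mul, sub_mul]
    apply na_sub_le hna
    · cases i with
      | zero => simpa using mul_nonneg (N.nonneg _) (N.nonneg _)
      | succ j =>
        rw [coeff_X_mul, N.map_mul, map_pow, pow_succ, ← mul_assoc, mul_comm]
        exact mul_le_mul hb (ih' j) (by positivity) (N.nonneg _)
    · rw [mul_assoc, N.map_mul, N.map_mul, map_pow]
      exact mul_le_mul hNb (ih' i) (by positivity) (N.nonneg _)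

lemma gauss_split (hna : IsNonarchimedean N) (y : K) (Q : K[X]) (hQ : Q.Splits)
    (h : ∀ b ∈ Q.roots, N y ≤ N (y - b)) (i : ℕ) :
    N (Q.coeff i) * N y ^ i ≤ N (Q.eval y) := by
  have h1 := gauss_prod hna y Q.roots h i
  rw [hQ.eq_prod_roots, coeff_C_mul, eval_mul, eval_C, N.map_mul, N.map_mul, mul_assoc]
  exact mul_le_mul_of_nonneg_left h1 (N.nonneg _)

lemma D_eval (P : K[X]) (y : K) : D (P.eval y) =
    ∑ i ∈ Finset.range (P.natDegree + 1), D (P.coeff i) * y ^ i + P.derivative.eval y * D y := by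
  rw [eval_eq_sum_range, map_sum]
  have : P.derivative.eval y
      = ∑ i ∈ Finset.range (P.natDegree + 1), P.coeff i * i * y ^ (i - 1) := by
    rw [derivative_eval, sum_over_range]
    intro n; simp
  rw [this, Finset.sum_mul, ← Finset.sum_add_distrib]
  refine Finset.sum_congr rfl fun i _ => ?_
  rw [D.leibniz, D.leibniz_pow]
  simp only [smul_eq_mul, nsmul_eq_mul]
  ring

lemma good_of_root (hna : IsNonarchimedean N) (hc : ∀ r : ℝ, N (algebraMap ℝ K r) ≤ 1)
    (P : K[X]) (y : K) (hP : ∀ i, GoodFor N D (P.coeff i)) (hy : P.eval y = 0)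
    (hd : P.derivative.eval y ≠ 0) (hs : P.derivative.Splits)
    (hroots : ∀ b ∈ P.derivative.roots, N y ≤ N (y - b)) : GoodFor N D y := by
  intro hy0
  have Ny := N.pos hy0
  set M := N (P.derivative.eval y) * N y with hM
  have hMpos : 0 < M := mul_pos (N.pos hd) Ny
  have hcast : ∀ n : ℕ, n ≠ 0 → N (n : K) = 1 := by
    intro n hn
    have := N_const (K := K) (N := N) hc (r := (n : ℝ)) (by exact_mod_cast hn)
    simpa using this
  have hpos : ∀ i, N (P.coeff (i + 1)) * N y ^ (i + 1) ≤ M := by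
    intro i
    have h1 := gauss_split hna y P.derivative hs hroots i
    rw [coeff_derivative, N.map_mul] at h1
    have h2 : N ((i : K) + 1) = 1 := by simpa using hcast (i + 1) (by omega)
    rw [h2, mul_one] at h1
    rw [pow_succ, ← mul_assoc]
    exact mul_le_mul_of_nonneg_right h1 Ny.le
  have hall : ∀ i, N (P.coeff i) * N y ^ i ≤ M := by
    intro i
    cases i with
    | succ i => exact hpos i
    | zero =>
      have h1 : P.coeff 0 = - ∑ i ∈ Finset.range P.natDegree, P.coeff (i + 1) * y ^ (i + 1) := by
        rw [eval_eq_sum_range, Finset.sum_range_succ'] at hy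
        simp only [pow_zero, mul_one] at hy
        linear_combination hy
      rw [h1, N.map_neg, pow_zero, mul_one]
      refine na_sum_le hna _ _ hMpos.le fun i _ => ?_
      rw [N.map_mul, map_pow]
      exact hpos i
  set γ := -Real.log (N y) with hγ
  set δ := -Real.log M with hδ
  have hD := D_eval (D := D) P y
  rw [hy, map_zero] at hD
  have hder : P.derivative.eval y * y
      = ∑ i ∈ Finset.range (P.natDegree + 1), P.coeff i * i * y ^ i := by
    rw [derivative_eval, sum_over_range, Finset.sum_mul]
    · refine Finset.sum_congr rfl fun i _ => ?_
      cases i with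
      | zero => simp
      | succ j => simp only [Nat.add_sub_cancel]; ring
    · intro n; simp
  have hy' := hy
  rw [eval_eq_sum_range] at hy'
  have key : - (P.derivative.eval y * (D y - algebraMap ℝ K γ * y)) =
      ∑ i ∈ Finset.range (P.natDegree + 1),
        (D (P.coeff i) + algebraMap ℝ K (i * γ - δ) * P.coeff i) * y ^ i := by
    have e1 : ∑ i ∈ Finset.range (P.natDegree + 1),
        (D (P.coeff i) + algebraMap ℝ K (i * γ - δ) * P.coeff i) * y ^ i
        = ∑ i ∈ Finset.range (P.natDegree + 1), D (P.coeff i) * y ^ i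
          + algebraMap ℝ K γ * ∑ i ∈ Finset.range (P.natDegree + 1), P.coeff i * i * y ^ i
          - algebraMap ℝ K δ * ∑ i ∈ Finset.range (P.natDegree + 1), P.coeff i * y ^ i := by
      rw [Finset.mul_sum, Finset.mul_sum, ← Finset.sum_add_distrib, ← Finset.sum_sub_distrib]
      refine Finset.sum_congr rfl fun i _ => ?_
      simp only [map_sub, map_mul, map_natCast]
      ring
    rw [e1, ← hder, hy']
    linear_combination hD
  have hlt : N (∑ i ∈ Finset.range (P.natDegree + 1),
        (D (P.coeff i) + algebraMap ℝ K (i * γ - δ) * P.coeff i) * y ^ i) < M := by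
    refine na_sum hna _ _ hMpos fun i _ => ?_
    by_cases h0 : P.coeff i = 0
    · simpa [h0] using hMpos
    have Nc := N.pos h0
    have hg := hP i h0
    have e2 : (D (P.coeff i) + algebraMap ℝ K (i * γ - δ) * P.coeff i) * y ^ i
      = (D (P.coeff i) - algebraMap ℝ K (-Real.log (N (P.coeff i))) * P.coeff i) * y ^ i
        + algebraMap ℝ K (-Real.log (N (P.coeff i)) + i * γ - δ) * (P.coeff i * y ^ i) := by
      simp only [map_sub, map_add]
      ring
    rw [e2]
    apply na_add hna
    · rw [N.map_mul, map_pow]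
      exact lt_of_lt_of_le (mul_lt_mul_of_pos_right hg (by positivity)) (hall i)
    · rcases (hall i).lt_or_eq with h | h
      · refine lt_of_le_of_lt (N_const_mul_le hc _ _) ?_
        rwa [N.map_mul, map_pow]
      · have : -Real.log (N (P.coeff i)) + i * γ - δ = 0 := by
          rw [hδ, ← h, Real.log_mul Nc.ne' (by positivity), Real.log_pow, hγ]
          ring
        rw [this]
        simpa using hMpos
  rw [← key, N.map_neg, N.map_mul, hM] at hlt
  exact lt_of_mul_lt_mul_left hlt (N.nonneg _)

end good

section ext

variable {K : Type*} [Field K] [Algebra ℝ K] [IsAlgClosed K] {N : AbsoluteValue K ℝ}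
  {D : Derivation ℝ K K}

lemma good_aeval (hna : IsNonarchimedean N) (hc : ∀ r : ℝ, N (algebraMap ℝ K r) ≤ 1)
    (E : IntermediateField ℝ K) (n : ℕ)
    (hcl : ∀ q : E[X], q ≠ 0 → q.natDegree < n → ∀ b : K, aeval b q = 0 → b ∈ E)
    (hE : ∀ a ∈ E, GoodFor N D a) (y : K) (hy : ∀ a ∈ E, GoodFor N D (y - a))
    (q : E[X]) (hq : q.natDegree < n) : GoodFor N D (aeval y q) := by
  by_cases hq0 : q = 0
  · intro h; simp [hq0] at h
  set Q := q.map (algebraMap E K) with hQ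
  have hev : aeval y q = Q.eval y := by rw [hQ, eval_map_algebraMap]
  have hsp := IsAlgClosed.splits Q
  rw [hev, hsp.eq_prod_roots, eval_mul, eval_C, eval_multiset_prod, Multiset.map_map]
  apply GoodFor.mul hna
  · apply hE
    rw [hQ, leadingCoeff_map]
    exact (q.leadingCoeff).2
  · apply good_multiset_prod hna hc
    intro a ha
    obtain ⟨b, hb, rfl⟩ := Multiset.mem_map.1 ha
    have : b ∈ E := by
      apply hcl q hq0 hq
      rw [← eval_map_algebraMap]
      exact (mem_roots'.1 hb).2
    simpa using hy b this

/-- Alternatives for a finite family: choose the nearest element. -/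
lemma exists_nearest (E : IntermediateField ℝ K) (y : K) (s : Finset K) (hs : ∀ b ∈ s, b ∈ E)
    (a : K) (ha : a ∈ E) : ∃ c ∈ E, (N (y - c) ≤ N (y - a)) ∧ ∀ b ∈ s, N (y - c) ≤ N (y - b) := by
  classical
  obtain ⟨c, hcm, hmin⟩ := Finset.exists_min_image (insert a s) (fun b => N (y - b)) ⟨a, by simp⟩
  refine ⟨c, ?_, hmin a (by simp), fun b hb => hmin b (by simp [hb])⟩
  rcases Finset.mem_insert.1 hcm with rfl | h
  · exact ha
  · exact hs _ h

lemma good_algebraic_sub (hna : IsNonarchimedean N) (hc : ∀ r : ℝ, N (algebraMap ℝ K r) ≤ 1)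
    (E : IntermediateField ℝ K) (y : K) (hyi : IsIntegral E y)
    (hcl : ∀ q : E[X], q ≠ 0 → q.natDegree < (minpoly E y).natDegree → ∀ b : K,
      aeval b q = 0 → b ∈ E)
    (hE : ∀ a ∈ E, GoodFor N D a) : ∀ a ∈ E, GoodFor N D (y - a) := by
  classical
  have : CharZero K := charZero_of_injective_algebraMap (algebraMap ℝ K).injective
  set p := minpoly E y with hp
  have hpd : p.derivative ≠ 0 := by
    intro h
    have h1 : p.natDegree = 0 := Polynomial.derivative_eq_zero.1 h
    have h2 : 0 < p.natDegree := minpoly.natDegree_pos hyi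
    omega
  have hdeg : p.derivative.natDegree < p.natDegree :=
    natDegree_derivative_lt (minpoly.natDegree_pos hyi).ne'
  set Q := (p.derivative).map (algebraMap E K) with hQ
  have hroots : ∀ b ∈ Q.roots, b ∈ E := by
    intro b hb
    apply hcl _ hpd hdeg
    rw [← eval_map_algebraMap]
    exact (mem_roots'.1 hb).2
  -- elements at least as near as all the roots of the derivative
  have main : ∀ a ∈ E, (∀ b ∈ Q.roots, N (y - a) ≤ N (y - b)) → GoodFor N D (y - a) := by
    intro a ha hab
    set P := (p.map (algebraMap E K)).comp (X + C a) with hP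
    have hPd : P.derivative = Q.comp (X + C a) := by
      rw [hP, derivative_comp, hQ, derivative_map]; simp
    apply good_of_root hna hc P
    · intro i
      apply hE
      have : P = (p.comp (X + C ⟨a, ha⟩)).map (algebraMap E K) := by
        rw [hP, Polynomial.map_comp]; simp
      rw [this, coeff_map]
      exact SetLike.coe_mem ((p.comp (X + C ⟨a, ha⟩)).coeff i)
    · rw [hP, eval_comp]
      simp only [eval_add, eval_X, eval_C, sub_add_cancel, eval_map_algebraMap]
      exact minpoly.aeval E y
    · rw [hPd, eval_comp]
      simp only [eval_add, eval_X, eval_C, sub_add_cancel, hQ, eval_map_algebraMap]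
      intro h
      have h1 : p.natDegree ≤ p.derivative.natDegree :=
        natDegree_le_natDegree (minpoly.degree_le_of_ne_zero E y hpd h)
      omega
    · exact IsAlgClosed.splits _
    · intro b hb
      have hb' := mem_roots'.1 hb
      rw [hPd] at hb'
      have h1 : b + a ∈ Q.roots := by
        rw [mem_roots']
        refine ⟨?_, ?_⟩
        · intro h; apply hb'.1; rw [h]; simp
        · have := hb'.2
          rw [IsRoot, eval_comp] at this
          simpa using this
      have := hab _ h1
      rwa [show y - (b + a) = y - a - b by ring] at this
  intro a ha
  obtain ⟨c, hcE, hca, hcb⟩ := exists_nearest (N := N) E y Q.roots.toFinset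
    (fun b hb => hroots b (Multiset.mem_toFinset.1 hb)) a ha
  rcases hca.lt_or_eq with hlt | heq
  · have h1 := main c hcE (fun b hb => hcb b (Multiset.mem_toFinset.2 hb))
    have h2 : N (c - a) = N (y - a) := by
      have : c - a = (y - a) + -(y - c) := by ring
      rw [this]
      apply hna.add_eq_left_of_lt
      rwa [N.map_neg]
    have h3 : y - a = (c - a) + (y - c) := by ring
    rw [h3]
    apply GoodFor.add_dom hna hc (hE _ (E.sub_mem hcE ha))
    · rw [h2]; exact lt_of_le_of_lt (h1.N_D_le hna hc) hlt
    · rwa [h2]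
  · exact main a ha (fun b hb => heq ▸ hcb b (Multiset.mem_toFinset.2 hb))

open IntermediateField in
lemma good_adjoin_algebraic (hna : IsNonarchimedean N) (hc : ∀ r : ℝ, N (algebraMap ℝ K r) ≤ 1)
    (E : IntermediateField ℝ K) (y : K) (hyi : IsIntegral E y)
    (hcl : ∀ q : E[X], q ≠ 0 → q.natDegree < (minpoly E y).natDegree → ∀ b : K,
      aeval b q = 0 → b ∈ E)
    (hE : ∀ a ∈ E, GoodFor N D a) : ∀ x ∈ E⟮y⟯, GoodFor N D x := by
  intro x hx
  have hsub := good_algebraic_sub hna hc E y hyi hcl hE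
  have hgood : ∀ q : E[X], GoodFor N D (aeval y q) := by
    intro q
    have h1 : aeval y q = aeval y (q %ₘ minpoly E y) := by
      conv_lhs => rw [← modByMonic_add_div q (minpoly E y)]
      simp
    rw [h1]
    apply good_aeval hna hc E _ hcl hE y hsub
    apply natDegree_modByMonic_lt _ (minpoly.monic hyi)
    exact minpoly.ne_one E y
  obtain ⟨r, s, rfl⟩ := (mem_adjoin_simple_iff E x).1 hx
  rw [div_eq_mul_inv]
  exact (hgood r).mul hna (hgood s).inv

/-- The field `E` is algebraically closed in `K`. -/
def ClosedIn {K : Type*} [Field K] [Algebra ℝ K] (E : IntermediateField ℝ K) : Prop :=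
  ∀ q : E[X], q ≠ 0 → ∀ b : K, aeval b q = 0 → b ∈ E

open IntermediateField in
lemma exists_closed_good (hna : IsNonarchimedean N) (hc : ∀ r : ℝ, N (algebraMap ℝ K r) ≤ 1)
    (E₀ : IntermediateField ℝ K) (hE₀ : ∀ a ∈ E₀, GoodFor N D a) :
    ∃ E : IntermediateField ℝ K, E₀ ≤ E ∧ (∀ a ∈ E, GoodFor N D a) ∧ ClosedIn E := by
  obtain ⟨E, hle, hmax⟩ := zorn_le_nonempty₀
    {F : IntermediateField ℝ K | ∀ a ∈ F, GoodFor N D a} (by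
      intro c hcs hchain F hF
      have : Nonempty c := ⟨⟨F, hF⟩⟩
      refine ⟨⨆ i : c, i.1, ?_, fun z hz => le_iSup (fun i : c => i.1) ⟨z, hz⟩⟩
      intro a ha
      have hdir : Directed (· ≤ ·) (fun i : c => i.1) := hchain.directedOn.directed_val
      rw [← SetLike.mem_coe, coe_iSup_of_directed hdir] at ha
      obtain ⟨i, hi⟩ := Set.mem_iUnion.1 ha
      exact hcs i.2 a hi) E₀ hE₀
  refine ⟨E, hle, hmax.1, ?_⟩
  by_contra hcon
  unfold ClosedIn at hcon
  push Not at hcon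
  have hex : ∃ n : ℕ, ∃ q : E[X], q ≠ 0 ∧ q.natDegree = n ∧ ∃ b : K, aeval b q = 0 ∧ b ∉ E := by
    obtain ⟨q, h1, b, h2, h3⟩ := hcon
    exact ⟨_, q, h1, rfl, b, h2, h3⟩
  classical
  have hspec := Nat.find_spec hex
  have hmin := fun k hk => Nat.find_min hex (m := k) hk
  obtain ⟨q, hq0, hqn, y, hqy, hyE⟩ := hspec
  have hyi : IsIntegral E y := (isAlgebraic_iff_isIntegral).1 ⟨q, hq0, hqy⟩
  have hdeg := natDegree_le_natDegree (minpoly.degree_le_of_ne_zero E y hq0 hqy)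
  have hgood := good_adjoin_algebraic (D := D) hna hc E y hyi (by
    intro q' hq' hlt b hb
    by_contra hbE
    exact hmin _ (lt_of_lt_of_le hlt (hqn ▸ hdeg)) ⟨q', hq', rfl, b, hb, hbE⟩) hmax.1
  have h2 : (E⟮y⟯).restrictScalars ℝ ≤ E :=
    hmax.2 (y := (E⟮y⟯).restrictScalars ℝ) (fun a ha => hgood a ha) (fun a ha => by
      rw [IntermediateField.mem_restrictScalars]
      exact (E⟮y⟯).algebraMap_mem ⟨a, ha⟩)
  exact hyE (h2 (by
    rw [IntermediateField.mem_restrictScalars]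
    exact mem_adjoin_simple_self E y))

end ext

section trans

variable {K : Type*} [Field K] [Algebra ℝ K] [IsAlgClosed K] {N : AbsoluteValue K ℝ}
  {D : Derivation ℝ K K}

/-- Predicted value of the derivation at `y`, seen from `a`. -/
noncomputable def centre {K : Type*} [Field K] [Algebra ℝ K] (N : AbsoluteValue K ℝ)
    (D : Derivation ℝ K K) (y a : K) : K :=
  D a + algebraMap ℝ K (-Real.log (N (y - a))) * (y - a)

lemma centre_consistent (hna : IsNonarchimedean N) (hc : ∀ r : ℝ, N (algebraMap ℝ K r) ≤ 1)
    (E : IntermediateField ℝ K) (hE : ∀ a ∈ E, GoodFor N D a) (y : K) (hy : y ∉ E)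
    (a b : K) (ha : a ∈ E) (hb : b ∈ E) (hr : N (y - b) ≤ N (y - a)) :
    N (centre N D y a - centre N D y b) < N (y - a) := by
  have hpos : 0 < N (y - a) := N.pos (fun h => hy (by rwa [sub_eq_zero.1 h]))
  have heq : centre N D y a - centre N D y b
      = (D (a - b) - algebraMap ℝ K (-Real.log (N (y - a))) * (a - b))
        + algebraMap ℝ K (-Real.log (N (y - a)) - -Real.log (N (y - b))) * (y - b) := by
    unfold centre
    rw [D.map_sub, (algebraMap ℝ K).map_sub]
    ring
  have hab : N (a - b) ≤ N (y - a) := by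
    have : a - b = (y - b) - (y - a) := by ring
    rw [this]
    exact na_sub_le hna hr le_rfl
  rw [heq]
  apply na_add hna
  · rcases hab.lt_or_eq with h | h
    · apply na_sub hna
      · exact lt_of_le_of_lt ((hE _ (E.sub_mem ha hb)).N_D_le hna hc) h
      · exact lt_of_le_of_lt (N_const_mul_le hc _ _) h
    · rw [← h]
      apply hE _ (E.sub_mem ha hb)
      intro h0
      rw [h0, N.map_zero] at h
      linarith
  · rcases hr.lt_or_eq with h | h
    · exact lt_of_le_of_lt (N_const_mul_le hc _ _) h
    · rw [h]; simpa using hpos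

lemma exists_centre (hna : IsNonarchimedean N) (hc : ∀ r : ℝ, N (algebraMap ℝ K r) ≤ 1)
    (hs : ∀ (c : ℕ → K) (r : ℕ → ℝ), (∀ i j, i ≤ j → N (c j - c i) < r i) →
      ∃ z, ∀ j, N (z - c j) ≤ r j)
    (E : IntermediateField ℝ K) (hE : ∀ a ∈ E, GoodFor N D a) (y : K) (hy : y ∉ E) :
    ∃ z, ∀ a ∈ E, N (z - centre N D y a) < N (y - a) := by
  by_cases hmin : ∃ a₀ ∈ E, ∀ a ∈ E, N (y - a₀) ≤ N (y - a)
  · obtain ⟨a₀, ha₀, h⟩ := hmin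
    refine ⟨centre N D y a₀, fun a ha => ?_⟩
    rw [← N.map_neg, neg_sub]
    exact centre_consistent hna hc E hE y hy a a₀ ha ha₀ (h a ha)
  push Not at hmin
  set S : Set ℝ := Set.range (fun a : E => N (y - a)) with hS
  have hbdd : BddBelow S := ⟨0, by rintro _ ⟨a, rfl⟩; exact N.nonneg _⟩
  have hne : S.Nonempty := ⟨_, ⟨0, rfl⟩⟩
  have hlow : ∀ a : E, sInf S < N (y - a) := by
    intro a
    obtain ⟨b, hb, hlt⟩ := hmin a a.2
    exact lt_of_le_of_lt (csInf_le hbdd ⟨⟨b, hb⟩, rfl⟩) hlt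
  have hstep : ∀ (j : ℕ) (a : E), ∃ b : E, N (y - b) ≤ N (y - a) ∧
      N (y - b) < sInf S + 1 / ((j : ℝ) + 1) := by
    intro j a
    have hlt : sInf S < min (N (y - a)) (sInf S + 1 / ((j : ℝ) + 1)) := by
      apply lt_min (hlow a)
      have : (0 : ℝ) < 1 / ((j : ℝ) + 1) := by positivity
      linarith
    obtain ⟨_, ⟨b, rfl⟩, hb⟩ := exists_lt_of_csInf_lt hne hlt
    exact ⟨b, (hb.trans_le (min_le_left _ _)).le, hb.trans_le (min_le_right _ _)⟩
  choose f hf1 hf2 using hstep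
  obtain ⟨s, hs1⟩ : ∃ s : ℕ → E, ∀ j, s (j + 1) = f j (s j) :=
    ⟨fun n => Nat.rec (0 : E) (fun j a => f j a) n, fun j => rfl⟩
  have hanti : Antitone (fun j : ℕ => N (y - (s j : K))) := by
    apply antitone_nat_of_succ_le
    intro j
    rw [hs1]
    exact hf1 j (s j)
  obtain ⟨z, hz⟩ := hs (fun j => centre N D y (s j)) (fun j => N (y - s j)) (by
    intro i j hij
    rw [← N.map_neg, neg_sub]
    exact centre_consistent hna hc E hE y hy _ _ (s i).2 (s j).2 (hanti hij))
  refine ⟨z, fun a ha => ?_⟩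
  obtain ⟨j, hj⟩ := exists_nat_one_div_lt (sub_pos.2 (hlow ⟨a, ha⟩))
  have hlt : N (y - s (j + 1)) < N (y - a) := by
    have := hf2 j (s j)
    rw [← hs1] at this
    simp only at hj
    linarith
  have : z - centre N D y a = (z - centre N D y (s (j + 1)))
      - (centre N D y a - centre N D y (s (j + 1))) := by ring
  rw [this]
  exact na_sub hna (lt_of_le_of_lt (hz (j + 1)) hlt)
    (centre_consistent hna hc E hE y hy _ _ ha (s (j + 1)).2 hlt.le)

open IntermediateField in
lemma extend_step (hna : IsNonarchimedean N) (hc : ∀ r : ℝ, N (algebraMap ℝ K r) ≤ 1)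
    (hs : ∀ (c : ℕ → K) (r : ℕ → ℝ), (∀ i j, i ≤ j → N (c j - c i) < r i) →
      ∃ z, ∀ j, N (z - c j) ≤ r j)
    (E : IntermediateField ℝ K) (hE : ∀ a ∈ E, GoodFor N D a) (hcl : ClosedIn E) (y : K) :
    ∃ (D' : Derivation ℝ K K) (E' : IntermediateField ℝ K), E ≤ E' ∧ y ∈ E' ∧
      (∀ a ∈ E', GoodFor N D' a) ∧ ClosedIn E' := by
  by_cases hy : y ∈ E
  · exact ⟨D, E, le_rfl, hy, hE, hcl⟩
  have : CharZero K := charZero_of_injective_algebraMap (algebraMap ℝ K).injective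
  have htr : Transcendental E y := by
    rintro ⟨q, hq, hq'⟩
    exact hy (hcl q hq y hq')
  obtain ⟨d, hd⟩ := exists_derivation_transcendental y htr
  obtain ⟨z, hz⟩ := exists_centre hna hc hs E hE y hy
  let D' : Derivation ℝ K K := D + (z - D y) • d.restrictScalars ℝ
  have hD'a : ∀ a ∈ E, D' a = D a := by
    intro a ha
    have h0 : d a = 0 := d.map_algebraMap (⟨a, ha⟩ : E)
    simp [D', h0]
  have hD'y : D' y = z := by simp [D', hd]
  have hE' : ∀ a ∈ E, GoodFor N D' a := by
    intro a ha h0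
    rw [hD'a a ha]
    exact hE a ha h0
  have hyE : ∀ a ∈ E, GoodFor N D' (y - a) := by
    intro a ha h0
    have := hz a ha
    rw [D'.map_sub, hD'y, hD'a a ha]
    unfold centre at this
    rwa [sub_sub]
  have hgood : ∀ q : E[X], GoodFor N D' (aeval y q) := fun q =>
    good_aeval hna hc E (q.natDegree + 1) (fun q' h0 _ b hb => hcl q' h0 b hb) hE' y hyE q
      (Nat.lt_succ_self _)
  obtain ⟨E', hle, h1, h2⟩ := exists_closed_good (D := D') hna hc ((E⟮y⟯).restrictScalars ℝ) (by
    intro x hx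
    rw [IntermediateField.mem_restrictScalars] at hx
    obtain ⟨r, s, rfl⟩ := (mem_adjoin_simple_iff E x).1 hx
    rw [div_eq_mul_inv]
    exact (hgood r).mul hna (hgood s).inv)
  refine ⟨D', E', fun a ha => hle ?_, hle ?_, h1, h2⟩
  · rw [IntermediateField.mem_restrictScalars]
    exact (E⟮y⟯).algebraMap_mem ⟨a, ha⟩
  · rw [IntermediateField.mem_restrictScalars]
    exact mem_adjoin_simple_self E y

lemma exists_good_derivation (hna : IsNonarchimedean N) (hc : ∀ r : ℝ, N (algebraMap ℝ K r) ≤ 1)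
    (hs : ∀ (c : ℕ → K) (r : ℕ → ℝ), (∀ i j, i ≤ j → N (c j - c i) < r i) →
      ∃ z, ∀ j, N (z - c j) ≤ r j) (s : Finset K) :
    ∃ (D : Derivation ℝ K K) (E : IntermediateField ℝ K), (∀ y ∈ s, y ∈ E) ∧
      (∀ a ∈ E, GoodFor N D a) ∧ ClosedIn E := by
  classical
  induction s using Finset.induction_on with
  | empty =>
    obtain ⟨E, -, h1, h2⟩ := exists_closed_good (D := (0 : Derivation ℝ K K)) hna hc ⊥ (by
      intro a ha
      obtain ⟨r, rfl⟩ := IntermediateField.mem_bot.1 ha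
      exact good_const hc r)
    exact ⟨0, E, by simp, h1, h2⟩
  | insert y s hys ih =>
    obtain ⟨D, E, h1, h2, h3⟩ := ih
    obtain ⟨D', E', h4, h5, h6, h7⟩ := extend_step hna hc hs E h2 h3 y
    refine ⟨D', E', ?_, h6, h7⟩
    intro x hx
    rcases Finset.mem_insert.1 hx with rfl | hx
    · exact h5
    · exact h4 (h1 x hx)

lemma mv_chain {σ : Type*} [Fintype σ] (f : MvPolynomial σ ℝ) (x : σ → K) :
    D (MvPolynomial.aeval x f)
      = ∑ i, MvPolynomial.aeval x (MvPolynomial.pderiv i f) * D (x i) := by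
  classical
  induction f using MvPolynomial.induction_on with
  | C a => simp
  | add p q hp hq => simp only [map_add, hp, hq, add_mul, Finset.sum_add_distrib]
  | mul_X p i hp =>
    simp only [Derivation.leibniz, MvPolynomial.pderiv_X, map_mul, MvPolynomial.aeval_X, hp,
      smul_eq_mul, map_add, add_mul, Finset.sum_add_distrib, Finset.mul_sum]
    congr 1
    · rw [Finset.sum_eq_single i]
      · simp
      · intro j _ hj
        simp [hj.symm]
      · simp
    · refine Finset.sum_congr rfl fun j _ => ?_
      ring

lemma no_bad_point (hna : IsNonarchimedean N) (hc : ∀ r : ℝ, N (algebraMap ℝ K r) ≤ 1)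
    (hs : ∀ (c : ℕ → K) (r : ℕ → ℝ), (∀ i j, i ≤ j → N (c j - c i) < r i) →
      ∃ z, ∀ j, N (z - c j) ≤ r j) {σ : Type*} [Fintype σ] (f : MvPolynomial σ ℝ) (x : σ → K)
    (hx : ∀ i, N (x i) ≤ 1) (hf : N (MvPolynomial.aeval x f) = (Real.exp 1)⁻¹)
    (hdf : ∀ i, N (MvPolynomial.aeval x (MvPolynomial.pderiv i f)) ≤ (Real.exp 1)⁻¹) : False := by
  classical
  obtain ⟨D, E, h1, h2, -⟩ := exists_good_derivation hna hc hs (Finset.univ.image x)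
  have hxE : ∀ i, x i ∈ E := fun i => h1 _ (Finset.mem_image_of_mem _ (Finset.mem_univ i))
  have hfE : MvPolynomial.aeval x f ∈ E := by
    have : MvPolynomial.aeval x f = (MvPolynomial.aeval (fun i => (⟨x i, hxE i⟩ : E)) f : E) := by
      have := MvPolynomial.map_aeval (fun i => (⟨x i, hxE i⟩ : E)) (algebraMap E K) f
      rw [show ((MvPolynomial.aeval (fun i => (⟨x i, hxE i⟩ : E)) f : E) : K)
        = algebraMap E K (MvPolynomial.aeval (fun i => (⟨x i, hxE i⟩ : E)) f) from rfl, this]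
      rfl
    rw [this]
    exact SetLike.coe_mem _
  have hepos : (0 : ℝ) < (Real.exp 1)⁻¹ := by positivity
  have hDx : ∀ i, N (D (x i)) < 1 := by
    intro i
    rcases (hx i).lt_or_eq with h | h
    · exact lt_of_le_of_lt ((h2 _ (hxE i)).N_D_le hna hc) h
    · have := h2 _ (hxE i) (by intro h0; rw [h0, N.map_zero] at h; norm_num at h)
      rw [h] at this
      simpa using this
  have hchain : D (MvPolynomial.aeval x f)
      = ∑ i, MvPolynomial.aeval x (MvPolynomial.pderiv i f) * D (x i) :=
    mv_chain f x
  have hlt : N (D (MvPolynomial.aeval x f)) < (Real.exp 1)⁻¹ := by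
    rw [hchain]
    apply na_sum hna _ _ hepos
    intro i _
    rw [N.map_mul]
    calc _ ≤ (Real.exp 1)⁻¹ * N (D (x i)) := mul_le_mul_of_nonneg_right (hdf i) (N.nonneg _)
      _ < (Real.exp 1)⁻¹ * 1 := mul_lt_mul_of_pos_left (hDx i) hepos
      _ = _ := mul_one _
  have hg := h2 _ hfE (by intro h0; rw [h0, N.map_zero] at hf; linarith)
  rw [hf, Real.log_inv, Real.log_exp, neg_neg, map_one, one_mul] at hg
  have := na_sub hna hlt hg
  rw [sub_sub_cancel, hf] at this
  exact lt_irrefl _ this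

end trans

section ultra

open Filter Topology

/-- A nonprincipal ultrafilter together with a scale of exponents tending to zero. -/
structure Scale where
  U : Ultrafilter ℕ
  ε : ℕ → ℝ
  pos : ∀ k, 0 < ε k
  tend : Tendsto ε U (𝓝 0)
  free : (U : Filter ℕ) ≤ atTop

namespace Scale

variable (S : Scale)

/-- Scaled size of a sequence. -/
noncomputable def sz (y : ℕ → ℂ) (k : ℕ) : ℝ := ‖y k‖ ^ S.ε k

lemma sz_nonneg (y : ℕ → ℂ) (k : ℕ) : 0 ≤ S.sz y k := Real.rpow_nonneg (norm_nonneg _) _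

lemma sz_mul (x y : ℕ → ℂ) (k : ℕ) : S.sz (x * y) k = S.sz x k * S.sz y k := by
  unfold sz
  rw [Pi.mul_apply, norm_mul, Real.mul_rpow (norm_nonneg _) (norm_nonneg _)]

lemma sz_mono {x y : ℕ → ℂ} {k : ℕ} (h : ‖x k‖ ≤ ‖y k‖) : S.sz x k ≤ S.sz y k :=
  Real.rpow_le_rpow (norm_nonneg _) h (S.pos k).le

lemma sz_zero_of {x : ℕ → ℂ} {k : ℕ} (h : x k = 0) : S.sz x k = 0 := by
  unfold sz
  rw [h, norm_zero, Real.zero_rpow (S.pos k).ne']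

lemma sz_add_le (x y : ℕ → ℂ) (k : ℕ) :
    S.sz (x + y) k ≤ (2 : ℝ) ^ S.ε k * max (S.sz x k) (S.sz y k) := by
  have h1 : ‖(x + y) k‖ ≤ 2 * max ‖x k‖ ‖y k‖ := by
    have := norm_add_le (x k) (y k)
    have h2 := le_max_left ‖x k‖ ‖y k‖
    have h3 := le_max_right ‖x k‖ ‖y k‖
    rw [Pi.add_apply]
    linarith
  have h2 : S.sz (x + y) k ≤ (2 * max ‖x k‖ ‖y k‖) ^ S.ε k :=
    Real.rpow_le_rpow (norm_nonneg _) h1 (S.pos k).le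
  rw [Real.mul_rpow (by norm_num) (le_max_of_le_left (norm_nonneg _))] at h2
  refine h2.trans (mul_le_mul_of_nonneg_left ?_ (by positivity))
  rcases le_total ‖x k‖ ‖y k‖ with h | h
  · rw [max_eq_right h]; exact le_max_right _ _
  · rw [max_eq_left h]; exact le_max_left _ _

lemma tend_const {c : ℝ} (hc : 0 < c) : Tendsto (fun k => c ^ S.ε k) S.U (𝓝 1) := by
  have := ((Real.continuous_const_rpow hc.ne').tendsto 0).comp S.tend
  rw [Real.rpow_zero] at this
  exact this

/-- Bounded at the scale. -/
def Bdd (y : ℕ → ℂ) : Prop := ∃ C, ∀ᶠ k in S.U, S.sz y k ≤ C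

lemma Bdd.add {x y : ℕ → ℂ} (hx : S.Bdd x) (hy : S.Bdd y) : S.Bdd (x + y) := by
  obtain ⟨C, hC⟩ := hx
  obtain ⟨C', hC'⟩ := hy
  refine ⟨2 * max C C', ?_⟩
  have h2 : ∀ᶠ k in S.U, (2 : ℝ) ^ S.ε k < 2 :=
    (S.tend_const (by norm_num)).eventually_lt_const (by norm_num)
  filter_upwards [hC, hC', h2] with k h1 h2 h3
  refine (S.sz_add_le x y k).trans (mul_le_mul h3.le (max_le_max h1 h2) ?_ (by norm_num))
  exact le_max_of_le_left (S.sz_nonneg _ _)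

lemma Bdd.mul {x y : ℕ → ℂ} (hx : S.Bdd x) (hy : S.Bdd y) : S.Bdd (x * y) := by
  obtain ⟨C, hC⟩ := hx
  obtain ⟨C', hC'⟩ := hy
  refine ⟨C * C', ?_⟩
  filter_upwards [hC, hC'] with k h1 h2
  rw [sz_mul]
  exact mul_le_mul h1 h2 (S.sz_nonneg _ _) ((S.sz_nonneg _ _).trans h1)

lemma Bdd.mono {x y : ℕ → ℂ} (hy : S.Bdd y) (h : ∀ k, ‖x k‖ ≤ ‖y k‖) : S.Bdd x := by
  obtain ⟨C, hC⟩ := hy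
  exact ⟨C, hC.mono fun k hk => (S.sz_mono (h k)).trans hk⟩

lemma sz_bounded_le {y : ℕ → ℂ} {B : ℝ} (hB : ∀ k, ‖y k‖ ≤ B) (k : ℕ) :
    S.sz y k ≤ (max 1 B) ^ S.ε k :=
  Real.rpow_le_rpow (norm_nonneg _) ((hB k).trans (le_max_right _ _)) (S.pos k).le

lemma bdd_of_bounded {y : ℕ → ℂ} {B : ℝ} (hB : ∀ k, ‖y k‖ ≤ B) : S.Bdd y := by
  refine ⟨2, ?_⟩
  have h2 : ∀ᶠ k in S.U, (max 1 B) ^ S.ε k < 2 :=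
    (S.tend_const (lt_max_of_lt_left one_pos)).eventually_lt_const (by norm_num)
  filter_upwards [h2] with k hk
  exact (S.sz_bounded_le hB k).trans hk.le

/-- The algebra of sequences bounded at the scale. -/
noncomputable def R : Subalgebra ℝ (ℕ → ℂ) where
  carrier := {y | S.Bdd y}
  mul_mem' := fun hx hy => Bdd.mul S hx hy
  add_mem' := fun hx hy => Bdd.add S hx hy
  algebraMap_mem' := fun r => S.bdd_of_bounded (B := |r|) (fun k => by simp)

lemma mem_R {y : ℕ → ℂ} : y ∈ S.R ↔ S.Bdd y := Iff.rfl

/-- The limit of the scaled sizes. -/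
noncomputable def val (y : ℕ → ℂ) : ℝ := limUnder (S.U : Filter ℕ) (S.sz y)

lemma tendsto_val {y : ℕ → ℂ} (hy : S.Bdd y) : Tendsto (S.sz y) S.U (𝓝 (S.val y)) := by
  obtain ⟨C, hC⟩ := hy
  have hK : IsCompact (Set.Icc (0 : ℝ) C) := isCompact_Icc
  obtain ⟨a, -, ha⟩ := hK.ultrafilter_le_nhds (S.U.map (S.sz y)) (by
    rw [le_principal_iff]
    change ∀ᶠ k in S.U, S.sz y k ∈ Set.Icc 0 C
    exact hC.mono fun k hk => ⟨S.sz_nonneg _ _, hk⟩)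
  exact tendsto_nhds_limUnder ⟨a, ha⟩

lemma val_eq {y : ℕ → ℂ} {c : ℝ} (h : Tendsto (S.sz y) S.U (𝓝 c)) : S.val y = c := h.limUnder_eq

lemma val_nonneg {y : ℕ → ℂ} (hy : S.Bdd y) : 0 ≤ S.val y :=
  ge_of_tendsto' (S.tendsto_val hy) (S.sz_nonneg y)

lemma val_le {y : ℕ → ℂ} (hy : S.Bdd y) {c : ℝ} (h : ∀ᶠ k in S.U, S.sz y k ≤ c) : S.val y ≤ c :=
  le_of_tendsto (S.tendsto_val hy) h

lemma val_mul {x y : ℕ → ℂ} (hx : S.Bdd x) (hy : S.Bdd y) :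
    S.val (x * y) = S.val x * S.val y := by
  apply S.val_eq
  have := (S.tendsto_val hx).mul (S.tendsto_val hy)
  refine this.congr fun k => ?_
  rw [sz_mul]

lemma val_add_le {x y : ℕ → ℂ} (hx : S.Bdd x) (hy : S.Bdd y) :
    S.val (x + y) ≤ max (S.val x) (S.val y) := by
  have h1 := (S.tend_const (c := 2) (by norm_num)).mul
    ((S.tendsto_val hx).max (S.tendsto_val hy))
  rw [one_mul] at h1
  exact le_of_tendsto_of_tendsto' (S.tendsto_val (Bdd.add S hx hy)) h1 (S.sz_add_le x y)

lemma val_neg (x : ℕ → ℂ) : S.val (-x) = S.val x := by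
  unfold val
  congr 1
  funext k
  simp [sz]

lemma val_zero_of {x : ℕ → ℂ} (h : ∀ᶠ k in S.U, x k = 0) : S.val x = 0 := by
  apply S.val_eq
  refine (tendsto_const_nhds (x := (0 : ℝ))).congr' ?_
  filter_upwards [h] with k hk
  rw [S.sz_zero_of hk]

lemma val_bounded_le {y : ℕ → ℂ} {B : ℝ} (hB : ∀ k, ‖y k‖ ≤ B) : S.val y ≤ 1 :=
  le_of_tendsto_of_tendsto' (S.tendsto_val (S.bdd_of_bounded hB))
    (S.tend_const (lt_max_of_lt_left one_pos)) (S.sz_bounded_le hB)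

lemma val_one : S.val 1 = 1 := by
  apply S.val_eq
  refine (tendsto_const_nhds (x := (1 : ℝ))).congr fun k => ?_
  simp [sz]

/-- The ideal of negligible sequences. -/
noncomputable def I : Ideal S.R where
  carrier := {y | S.val y = 0}
  zero_mem' := S.val_zero_of (Eventually.of_forall fun k => rfl)
  add_mem' := by
    intro a b ha hb
    have h1 : S.val (a : ℕ → ℂ) = 0 := ha
    have h2 : S.val (b : ℕ → ℂ) = 0 := hb
    have h3 := S.val_add_le a.2 b.2
    rw [h1, h2, max_self] at h3
    exact le_antisymm h3 (S.val_nonneg (a + b).2)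
  smul_mem' := by
    intro c x hx
    have h1 : S.val (x : ℕ → ℂ) = 0 := hx
    change S.val ((c : ℕ → ℂ) * (x : ℕ → ℂ)) = 0
    rw [S.val_mul c.2 x.2, h1, mul_zero]

lemma mem_I {y : S.R} : y ∈ S.I ↔ S.val y = 0 := Iff.rfl

instance : S.I.IsMaximal := by
  rw [Ideal.isMaximal_iff]
  refine ⟨?_, ?_⟩
  · rw [mem_I]
    change ¬ S.val 1 = 0
    rw [val_one]; norm_num
  · intro J y hIJ hy hyJ
    rw [mem_I] at hy
    have hpos : 0 < S.val y := lt_of_le_of_ne (S.val_nonneg y.2) (Ne.symm hy)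
    have hev : ∀ᶠ k in S.U, S.val y / 2 < S.sz y k :=
      (S.tendsto_val y.2).eventually_const_lt (by linarith)
    have hinv : S.Bdd (fun k => ((y : ℕ → ℂ) k)⁻¹) := by
      refine ⟨(S.val y / 2)⁻¹, ?_⟩
      filter_upwards [hev] with k hk
      have : S.sz (fun k => ((y : ℕ → ℂ) k)⁻¹) k = (S.sz y k)⁻¹ := by
        unfold sz
        rw [norm_inv, Real.inv_rpow (norm_nonneg _)]
      rw [this]
      exact inv_anti₀ (by linarith) hk.le
    let z : S.R := ⟨_, hinv⟩
    have h1 : 1 - z * y ∈ S.I := by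
      rw [mem_I]
      apply S.val_zero_of
      filter_upwards [hev] with k hk
      have hne : (y : ℕ → ℂ) k ≠ 0 := by
        intro h0
        rw [S.sz_zero_of h0] at hk
        linarith
      change (1 : ℂ) - ((y : ℕ → ℂ) k)⁻¹ * (y : ℕ → ℂ) k = 0
      rw [inv_mul_cancel₀ hne, sub_self]
    have h2 := J.add_mem (hIJ h1) (J.mul_mem_left z hyJ)
    simpa using h2

/-- The asymptotic field. -/
abbrev F : Type := S.R ⧸ S.I

noncomputable instance : Field S.F := Ideal.Quotient.field S.I

/-- The quotient map. -/
noncomputable def qm : S.R →ₐ[ℝ] S.F := Ideal.Quotient.mkₐ ℝ S.I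

lemma mk_surj : Function.Surjective S.qm := Ideal.Quotient.mkₐ_surjective ℝ S.I

lemma mk_eq {x y : S.R} : S.qm x = S.qm y ↔ S.val ((x : ℕ → ℂ) - y) = 0 := by
  change Ideal.Quotient.mk S.I x = Ideal.Quotient.mk S.I y ↔ _
  rw [Ideal.Quotient.eq]
  rfl

lemma val_le_of_mk_eq {x y : S.R} (h : S.qm x = S.qm y) : S.val x ≤ S.val y := by
  have h1 := S.mk_eq.1 h
  have h2 := S.val_add_le (x - y).2 y.2
  have h3 : ((x - y : S.R) : ℕ → ℂ) + y = x := by simp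
  rw [h3] at h2
  change _ ≤ max (S.val ((x : ℕ → ℂ) - y)) _ at h2
  rw [h1, max_eq_right (S.val_nonneg y.2)] at h2
  exact h2

/-- The absolute value on the asymptotic field. -/
noncomputable def nv (x : S.F) : ℝ := S.val (Function.surjInv S.mk_surj x : S.R)

lemma nv_mk (x : S.R) : S.nv (S.qm x) = S.val x := by
  have h := Function.surjInv_eq S.mk_surj (S.qm x)
  exact le_antisymm (S.val_le_of_mk_eq h) (S.val_le_of_mk_eq h.symm)

lemma nv_add_le (x y : S.F) : S.nv (x + y) ≤ max (S.nv x) (S.nv y) := by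
  obtain ⟨a, rfl⟩ := S.mk_surj x
  obtain ⟨b, rfl⟩ := S.mk_surj y
  rw [← map_add, nv_mk, nv_mk, nv_mk]
  exact S.val_add_le a.2 b.2

lemma nv_nonneg (x : S.F) : 0 ≤ S.nv x := S.val_nonneg (Subtype.prop _)

/-- The absolute value on the asymptotic field, bundled. -/
noncomputable def N : AbsoluteValue S.F ℝ where
  toFun := S.nv
  map_mul' := by
    intro x y
    obtain ⟨a, rfl⟩ := S.mk_surj x
    obtain ⟨b, rfl⟩ := S.mk_surj y
    rw [← map_mul, nv_mk, nv_mk, nv_mk]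
    exact S.val_mul a.2 b.2
  nonneg' := S.nv_nonneg
  eq_zero' := by
    intro x
    obtain ⟨a, rfl⟩ := S.mk_surj x
    rw [nv_mk, ← map_zero S.qm, mk_eq]
    simp
  add_le' := by
    intro x y
    refine (S.nv_add_le x y).trans (max_le ?_ ?_)
    · linarith [S.nv_nonneg y]
    · linarith [S.nv_nonneg x]

lemma N_mk (x : S.R) : S.N (S.qm x) = S.val x := S.nv_mk x

lemma N_na : IsNonarchimedean S.N := S.nv_add_le

lemma N_le_one (r : ℝ) : S.N (algebraMap ℝ S.F r) ≤ 1 := by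
  rw [← S.qm.commutes, N_mk]
  exact S.val_bounded_le (B := |r|) (fun k => by
    change ‖((r : ℝ) : ℂ)‖ ≤ |r|
    simp)

lemma N_spherical (c : ℕ → S.F) (r : ℕ → ℝ) (h : ∀ i j, i ≤ j → S.N (c j - c i) < r i) :
    ∃ z, ∀ j, S.N (z - c j) ≤ r j := by
  classical
  choose d hd using fun j => S.mk_surj (c j)
  let P : ℕ → ℕ → Prop := fun k J => ∀ i j, i ≤ j → j ≤ J →
    S.sz ((d j : ℕ → ℂ) - d i) k ≤ r i
  have hP : ∀ J, ∀ᶠ k in S.U, P k J := by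
    intro J
    have h1 : ∀ i ∈ Finset.range (J + 1), ∀ᶠ k in S.U, ∀ j ∈ Finset.range (J + 1), i ≤ j →
        S.sz ((d j : ℕ → ℂ) - d i) k ≤ r i := by
      intro i _
      rw [eventually_all_finset]
      intro j _
      by_cases hij : i ≤ j
      · have h2 := h i j hij
        rw [← hd, ← hd, ← map_sub, N_mk] at h2
        have := (S.tendsto_val (d j - d i).2).eventually_lt_const h2
        exact this.mono fun k hk _ => hk.le
      · exact Eventually.of_forall fun k hk => absurd hk hij
    rw [← eventually_all_finset] at h1
    exact h1.mono fun k hk i j hij hj =>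
      hk i (by simp; omega) j (by simp; omega) hij
  have hP0 : ∀ k, P k 0 := by
    intro k i j hij hj
    obtain rfl : j = 0 := by omega
    obtain rfl : i = 0 := by omega
    have h2 := h 0 0 le_rfl
    rw [sub_self, S.N.map_zero] at h2
    rw [S.sz_zero_of (by simp)]
    exact h2.le
  let J : ℕ → ℕ := fun k => Nat.findGreatest (P k) k
  have hJP : ∀ k, P k (J k) := fun k => Nat.findGreatest_spec (Nat.zero_le k) (hP0 k)
  let z : ℕ → ℂ := fun k => (d (J k) : ℕ → ℂ) k
  have hz : ∀ j, ∀ᶠ k in S.U, S.sz (z - d j) k ≤ r j := by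
    intro j
    have hk : ∀ᶠ k in S.U, j ≤ k := S.free (eventually_ge_atTop j)
    filter_upwards [hk, hP j] with k h1 h2
    have h3 : j ≤ J k := Nat.le_findGreatest h1 h2
    exact hJP k j (J k) h3 le_rfl
  have hzb : ∀ j, S.Bdd (z - d j) := fun j => ⟨_, hz j⟩
  have hzR : S.Bdd z := by
    have := Bdd.add S (hzb 0) (d 0).2
    rwa [sub_add_cancel] at this
  refine ⟨S.qm ⟨z, hzR⟩, fun j => ?_⟩
  rw [← hd, ← map_sub, N_mk]
  exact S.val_le (hzb j) (hz j)

instance : IsAlgClosed S.F := by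
  apply IsAlgClosed.of_exists_root
  intro p hp hirr
  have hn : 0 < p.natDegree := hirr.natDegree_pos
  set n := p.natDegree with hn'
  choose d hd using fun j => S.mk_surj (p.coeff j)
  have hroot : ∀ k : ℕ, ∃ w : ℂ, w ^ n + ∑ i ∈ Finset.range n, (d i : ℕ → ℂ) k * w ^ i = 0 := by
    intro k
    have hdeg : ((X : ℂ[X]) ^ n + ∑ i ∈ Finset.range n, C ((d i : ℕ → ℂ) k) * X ^ i).degree = n := by
      rw [degree_add_eq_left_of_degree_lt, degree_X_pow]
      rw [degree_X_pow]
      refine lt_of_le_of_lt (degree_sum_le _ _) ?_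
      rw [Finset.sup_lt_iff (WithBot.bot_lt_coe _)]
      intro i hi
      refine lt_of_le_of_lt (degree_C_mul_X_pow_le _ _) ?_
      exact_mod_cast Finset.mem_range.1 hi
    obtain ⟨w, hw⟩ := IsAlgClosed.exists_root _ (by rw [hdeg]; exact_mod_cast hn.ne')
    refine ⟨w, ?_⟩
    simpa [IsRoot, eval_finsetSum] using hw
  choose w hw using hroot
  have hbound : ∀ k, ‖w k‖ ≤ 1 + ∑ i ∈ Finset.range n, ‖(d i : ℕ → ℂ) k‖ := by
    intro k
    have hs : 0 ≤ ∑ i ∈ Finset.range n, ‖(d i : ℕ → ℂ) k‖ :=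
      Finset.sum_nonneg fun i _ => norm_nonneg _
    by_cases h1 : ‖w k‖ ≤ 1
    · linarith
    push Not at h1
    have h2 : ‖w k‖ ^ n ≤ (∑ i ∈ Finset.range n, ‖(d i : ℕ → ℂ) k‖) * ‖w k‖ ^ (n - 1) := by
      rw [← norm_pow, eq_neg_of_add_eq_zero_left (hw k), norm_neg, Finset.sum_mul]
      refine (norm_sum_le _ _).trans (Finset.sum_le_sum fun i hi => ?_)
      rw [norm_mul, norm_pow]
      have := Finset.mem_range.1 hi
      exact mul_le_mul_of_nonneg_left (pow_le_pow_right₀ h1.le (by omega)) (norm_nonneg _)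
    have h3 : ‖w k‖ ^ n = ‖w k‖ * ‖w k‖ ^ (n - 1) := by
      rw [← pow_succ']; congr 1; omega
    rw [h3] at h2
    have := le_of_mul_le_mul_right h2 (by positivity)
    linarith
  have hwB : S.Bdd w := by
    let b : ℕ → ℂ := 1 + ∑ i ∈ Finset.range n, fun k => ((‖(d i : ℕ → ℂ) k‖ : ℝ) : ℂ)
    have hb : b ∈ S.R := by
      refine S.R.add_mem S.R.one_mem (S.R.sum_mem fun i _ => ?_)
      exact Bdd.mono S (d i).2 (fun k => by simp)
    refine Bdd.mono S hb fun k => (hbound k).trans ?_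
    have : b k = ((1 + ∑ i ∈ Finset.range n, ‖(d i : ℕ → ℂ) k‖ : ℝ) : ℂ) := by
      simp [b, Finset.sum_apply]
    rw [this, Complex.norm_real]
    exact le_abs_self _
  refine ⟨S.qm ⟨w, hwB⟩, ?_⟩
  rw [eval_eq_sum_range, Finset.sum_range_succ, ← hn', hp.coeff_natDegree, one_mul]
  simp only [← hd, ← map_pow, ← map_mul, ← map_sum, ← map_add]
  rw [← map_zero S.qm]
  congr 1
  apply Subtype.ext
  funext k
  have := hw k
  rw [add_comm] at this
  simpa [Finset.sum_apply] using this

end Scale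

end ultra

section kl

open Filter Topology

lemma scale_aeval (S : Scale) {σ : Type*} (x : ℕ → σ → ℝ) (y : σ → S.R)
    (hy : ∀ i k, (y i : ℕ → ℂ) k = ((x k i : ℝ) : ℂ)) (f : MvPolynomial σ ℝ) (k : ℕ) :
    ((MvPolynomial.aeval y f : S.R) : ℕ → ℂ) k = ((MvPolynomial.eval (x k) f : ℝ) : ℂ) := by
  induction f using MvPolynomial.induction_on with
  | C a =>
    rw [MvPolynomial.aeval_C, MvPolynomial.eval_C]
    rfl
  | add p q hp hq => simp [hp, hq]
  | mul_X p i hp => simp [hp, hy]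

/-- Lojasiewicz gradient inequality for polynomials, near the zero level. -/
theorem poly_lojasiewicz {σ : Type*} [Fintype σ] (f : MvPolynomial σ ℝ) (B : ℝ) :
    ∃ θ : ℝ, 0 ≤ θ ∧ θ < 1 ∧ ∃ η : ℝ, 0 < η ∧ ∀ x : σ → ℝ, (∀ i, |x i| ≤ B) →
      0 < |MvPolynomial.eval x f| → |MvPolynomial.eval x f| < η →
      ∃ i, |MvPolynomial.eval x f| ^ θ ≤ |MvPolynomial.eval x (MvPolynomial.pderiv i f)| := by
  by_contra hcon
  push Not at hcon
  have hex : ∀ k : ℕ, ∃ x : σ → ℝ, (∀ i, |x i| ≤ B) ∧ 0 < |MvPolynomial.eval x f| ∧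
      |MvPolynomial.eval x f| < 1 / ((k : ℝ) + 1) ∧
      ∀ i, |MvPolynomial.eval x (MvPolynomial.pderiv i f)|
        < |MvPolynomial.eval x f| ^ (1 - 1 / ((k : ℝ) + 1)) := by
    intro k
    have h1 : (0 : ℝ) < 1 / ((k : ℝ) + 1) := by positivity
    have h2 : 1 / ((k : ℝ) + 1) ≤ 1 := by
      rw [div_le_one (by positivity)]
      have : (0 : ℝ) ≤ k := Nat.cast_nonneg k
      linarith
    exact hcon (1 - 1 / ((k : ℝ) + 1)) (by linarith) (by linarith) _ h1
  choose x hxB hx0 hx1 hxd using hex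
  set t : ℕ → ℝ := fun k => |MvPolynomial.eval (x k) f| with ht
  have hone : Tendsto (fun k : ℕ => 1 / ((k : ℝ) + 1)) atTop (𝓝 0) :=
    tendsto_one_div_add_atTop_nhds_zero_nat
  have ht0 : Tendsto t atTop (𝓝 0) :=
    squeeze_zero (fun k => (hx0 k).le) (fun k => (hx1 k).le) hone
  have htlt : ∀ k, t k < 1 := fun k => (hx1 k).trans_le (by
    rw [div_le_one (by positivity)]
    have : (0 : ℝ) ≤ k := Nat.cast_nonneg k
    linarith)
  have hlog : ∀ k, Real.log (t k) < 0 := fun k => Real.log_neg (hx0 k) (htlt k)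
  have hlogt : Tendsto (fun k => -Real.log (t k)) atTop atTop := by
    have h1 : Tendsto t atTop (𝓝[>] 0) :=
      tendsto_nhdsWithin_iff.2 ⟨ht0, Eventually.of_forall hx0⟩
    exact tendsto_neg_atBot_atTop.comp (Real.tendsto_log_nhdsGT_zero.comp h1)
  let S : Scale :=
    { U := hyperfilter ℕ
      ε := fun k => (-Real.log (t k))⁻¹
      pos := fun k => inv_pos.2 (by linarith [hlog k])
      tend := (tendsto_inv_atTop_zero.comp hlogt).mono_left Nat.hyperfilter_le_atTop
      free := Nat.hyperfilter_le_atTop }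
  have hte : ∀ k, t k ^ S.ε k = (Real.exp 1)⁻¹ := by
    intro k
    rw [Real.rpow_def_of_pos (hx0 k), ← Real.exp_neg]
    congr 1
    change Real.log (t k) * (-Real.log (t k))⁻¹ = -1
    have := (hlog k).ne
    field_simp
  have hbd : ∀ i k, ‖((x k i : ℝ) : ℂ)‖ ≤ B := by
    intro i k
    rw [Complex.norm_real]
    exact hxB k i
  let y : σ → S.R := fun i => ⟨fun k => ((x k i : ℝ) : ℂ), S.bdd_of_bounded (hbd i)⟩
  have hy := scale_aeval S x y (fun i k => rfl)
  have hae : ∀ g : MvPolynomial σ ℝ, MvPolynomial.aeval (fun i => S.qm (y i)) g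
      = S.qm (MvPolynomial.aeval y g) := by
    intro g
    have := MvPolynomial.comp_aeval_apply y S.qm g
    exact this.symm
  have hsz : ∀ (g : MvPolynomial σ ℝ) (k : ℕ),
      S.sz (MvPolynomial.aeval y g : S.R) k = |MvPolynomial.eval (x k) g| ^ S.ε k := by
    intro g k
    unfold Scale.sz
    rw [hy, Complex.norm_real, Real.norm_eq_abs]
  refine no_bad_point (N := S.N) S.N_na S.N_le_one S.N_spherical f (fun i => S.qm (y i)) ?_ ?_ ?_
  · intro i
    rw [Scale.N_mk]
    exact S.val_bounded_le (hbd i)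
  · rw [hae, Scale.N_mk]
    apply S.val_eq
    refine tendsto_const_nhds.congr fun k => ?_
    rw [hsz]
    exact (hte k).symm
  · intro i
    rw [hae, Scale.N_mk]
    have hlim : Tendsto (fun k : ℕ => ((Real.exp 1)⁻¹) ^ (1 - 1 / ((k : ℝ) + 1))) S.U
        (𝓝 (Real.exp 1)⁻¹) := by
      have h1 : Tendsto (fun k : ℕ => 1 - 1 / ((k : ℝ) + 1)) atTop (𝓝 1) := by
        simpa using hone.const_sub 1
      have h2 := ((Real.continuous_const_rpow (a := (Real.exp 1)⁻¹)
        (by positivity)).tendsto 1).comp (h1.mono_left Nat.hyperfilter_le_atTop)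
      rw [Real.rpow_one] at h2
      exact h2
    refine le_of_tendsto_of_tendsto' (S.tendsto_val (MvPolynomial.aeval y _).2) hlim fun k => ?_
    rw [hsz, ← hte k, ← Real.rpow_mul (hx0 k).le, mul_comm, Real.rpow_mul (hx0 k).le]
    exact Real.rpow_le_rpow (abs_nonneg _) (hxd k i).le (S.pos k).le

end kl

section abstractKL

open Filter Topology

lemma rpow_concave_ineq {a b p : ℝ} (ha : 0 < a) (hb : 0 ≤ b) (hp0 : 0 ≤ p) (hp1 : p ≤ 1) :
    p * a ^ (p - 1) * (a - b) ≤ a ^ p - b ^ p := by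
  have h1 := rpow_one_add_le_one_add_mul_self (s := b / a - 1) (p := p)
    (by have : 0 ≤ b / a := by positivity
        linarith) hp0 hp1
  rw [add_sub_cancel, Real.div_rpow hb ha.le] at h1
  have hap : 0 < a ^ p := Real.rpow_pos_of_pos ha p
  rw [div_le_iff₀ hap] at h1
  rw [Real.rpow_sub_one ha.ne']
  have h2 : p * (a ^ p / a) * (a - b) = a ^ p - (1 + p * (b / a - 1)) * a ^ p := by
    field_simp
    ring
  rw [h2]
  linarith

lemma summable_of_kl (h d : ℕ → ℝ) (θ c C : ℝ) (hθ0 : 0 ≤ θ) (hθ1 : θ < 1) (hc : 0 < c)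
    (hd : ∀ k, 0 ≤ d k) (hh : ∀ k, 0 ≤ h k)
    (hdesc : ∀ k, c * d k ^ 2 ≤ h k - h (k + 1)) (K : ℕ)
    (hkl : ∀ k, K ≤ k → 0 < h (k + 1) → h (k + 1) ^ θ ≤ C * d k) : Summable d := by
  have hanti : Antitone h := antitone_nat_of_succ_le fun k => by
    have := hdesc k
    have h2 : 0 ≤ c * d k ^ 2 := by positivity
    linarith
  by_cases hz : ∃ k₀, h k₀ = 0
  · obtain ⟨k₀, hk₀⟩ := hz
    rw [← summable_nat_add_iff k₀]
    have : (fun n => d (n + k₀)) = fun _ => 0 := by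
      funext n
      have h1 : h (n + k₀) ≤ 0 := hk₀ ▸ hanti (Nat.le_add_left _ _)
      have h2 := hdesc (n + k₀)
      have h3 := hh (n + k₀ + 1)
      have h4 : d (n + k₀) ^ 2 ≤ 0 := by
        by_contra h5
        push Not at h5
        have := mul_pos hc h5
        linarith
      exact pow_eq_zero_iff (two_ne_zero) |>.1 (le_antisymm h4 (sq_nonneg _))
    rw [this]
    exact summable_zero
  push Not at hz
  have hpos : ∀ k, 0 < h k := fun k => lt_of_le_of_ne (hh k) (Ne.symm (hz k))
  set p := 1 - θ with hp
  have hp0 : 0 < p := by linarith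
  set A := C / (p * c) with hA
  have hC : 0 < C := by
    have h1 := hkl K le_rfl (hpos _)
    have h2 : 0 < h (K + 1) ^ θ := Real.rpow_pos_of_pos (hpos _) _
    by_contra h3
    push Not at h3
    have := mul_nonpos_of_nonpos_of_nonneg h3 (hd K)
    linarith
  have hA0 : 0 < A := by positivity
  have hstep : ∀ k, K ≤ k → 2 * d (k + 1) ≤ d k + A * (h (k + 1) ^ p - h (k + 2) ^ p) := by
    intro k hk
    have h1 := hkl k hk (hpos _)
    have h2 := rpow_concave_ineq (p := p) (hpos (k + 1)) (hh (k + 2)) hp0.le (by linarith)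
    have h3 := hdesc (k + 1)
    rw [show p - 1 = -θ by rw [hp]; ring, Real.rpow_neg (hh _)] at h2
    have h4 : 0 < h (k + 1) ^ θ := Real.rpow_pos_of_pos (hpos _) _
    set Δ := h (k + 1) ^ p - h (k + 2) ^ p with hΔ
    have h5 : p * (h (k + 1) - h (k + 2)) ≤ Δ * h (k + 1) ^ θ := by
      have := mul_le_mul_of_nonneg_right h2 h4.le
      rwa [show p * (h (k + 1) ^ θ)⁻¹ * (h (k + 1) - h (k + 2)) * h (k + 1) ^ θ
        = p * (h (k + 1) - h (k + 2)) by field_simp] at this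
    have hh2 : h (k + 1 + 1) ≤ h (k + 1) := hanti (Nat.le_succ _)
    have hΔ0 : 0 ≤ Δ := by
      have : h (k + 2) ^ p ≤ h (k + 1) ^ p := Real.rpow_le_rpow (hh _) hh2 hp0.le
      linarith
    have h6 : p * (c * d (k + 1) ^ 2) ≤ Δ * (C * d k) :=
      calc _ ≤ p * (h (k + 1) - h (k + 2)) := mul_le_mul_of_nonneg_left h3 hp0.le
        _ ≤ _ := h5
        _ ≤ _ := mul_le_mul_of_nonneg_left h1 hΔ0
    have h7 : d (k + 1) ^ 2 ≤ d k * (A * Δ) := by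
      have : d k * (A * Δ) = (Δ * (C * d k)) / (p * c) := by
        rw [hA]; field_simp
      rw [this, le_div_iff₀ (by positivity)]
      linarith
    have h8 : 0 ≤ A * Δ := by positivity
    have h9 := hd k
    apply abs_le_of_sq_le_sq' _ (by positivity) |>.2
    nlinarith [sq_nonneg (d k - A * Δ)]
  rw [← summable_nat_add_iff (K + 1)]
  refine summable_of_sum_range_le (c := d K + A * h (K + 1) ^ p) (fun n => hd _) ?_
  have hind : ∀ n, ∑ j ∈ Finset.range n, d (j + (K + 1)) + d (K + n)
      ≤ d K + A * (h (K + 1) ^ p - h (K + n + 1) ^ p) := by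
    intro n
    induction n with
    | zero => simp
    | succ n ih =>
      rw [Finset.sum_range_succ]
      have := hstep (K + n) (by omega)
      rw [show n + (K + 1) = K + n + 1 by ring]
      rw [show K + (n + 1) = K + n + 1 by ring]
      rw [show K + n + 1 + 1 = K + n + 2 by ring]
      linarith
  intro n
  have h1 := hind n
  have h2 := hd (K + n)
  have h3 : 0 ≤ A * h (K + n + 1) ^ p := mul_nonneg hA0.le (Real.rpow_nonneg (hh _) _)
  linarith

end abstractKL

section mvpoly

variable {σ : Type*} [Fintype σ]

lemma mv_hasDerivAt [DecidableEq σ] (P : MvPolynomial σ ℝ) (x : σ → ℝ) (i : σ) :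
    HasDerivAt (fun t : ℝ => MvPolynomial.eval (Function.update x i t) P)
      (MvPolynomial.eval x (MvPolynomial.pderiv i P)) (x i) := by
  induction P using MvPolynomial.induction_on with
  | C a => simpa using hasDerivAt_const (x i) a
  | add p q hp hq =>
    simp only [map_add]
    exact hp.add hq
  | mul_X p j hp =>
    have hX : HasDerivAt (fun t : ℝ => Function.update x i t j)
        (if i = j then 1 else 0) (x i) := by
      by_cases hij : i = j
      · subst hij; simpa using hasDerivAt_id' (x i)
      · simpa [hij, Function.update_of_ne (Ne.symm hij)] using hasDerivAt_const (x i) (x j)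
    have := hp.mul hX
    simp only [Function.update_eq_self] at this
    have h2 : (fun t : ℝ => MvPolynomial.eval (Function.update x i t) (p * MvPolynomial.X j))
        = (fun t : ℝ => MvPolynomial.eval (Function.update x i t) p) *
          (fun t : ℝ => Function.update x i t j) := by
      funext t; simp
    rw [h2]
    refine this.congr_deriv ?_
    simp only [Derivation.leibniz, MvPolynomial.pderiv_X, smul_eq_mul, map_add, map_mul,
      MvPolynomial.eval_X]
    by_cases hij : i = j
    · subst hij; simp; ring
    · simp [hij, Ne.symm hij]; ring

lemma mv_lipschitz (P : MvPolynomial σ ℝ) (B : ℝ) : ∃ C, 0 ≤ C ∧ ∀ x y : σ → ℝ,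
    (∀ i, |x i| ≤ B) → (∀ i, |y i| ≤ B) → |MvPolynomial.eval x P| ≤ C ∧
    |MvPolynomial.eval x P - MvPolynomial.eval y P| ≤ C * ∑ i, |x i - y i| := by
  have hs : ∀ x y : σ → ℝ, 0 ≤ ∑ i, |x i - y i| := fun x y =>
    Finset.sum_nonneg fun i _ => abs_nonneg _
  induction P using MvPolynomial.induction_on with
  | C a =>
    refine ⟨|a|, abs_nonneg _, fun x y _ _ => ⟨by simp, ?_⟩⟩
    simpa using mul_nonneg (abs_nonneg a) (hs x y)
  | add p q hp hq =>
    obtain ⟨C, hC, h⟩ := hp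
    obtain ⟨C', hC', h'⟩ := hq
    refine ⟨C + C', by positivity, fun x y hx hy => ⟨?_, ?_⟩⟩
    · rw [map_add]
      exact (abs_add_le _ _).trans (add_le_add (h x y hx hy).1 (h' x y hx hy).1)
    · rw [map_add, map_add, add_sub_add_comm, add_mul]
      exact (abs_add_le _ _).trans (add_le_add (h x y hx hy).2 (h' x y hx hy).2)
  | mul_X p j hp =>
    obtain ⟨C, hC, h⟩ := hp
    refine ⟨C * |B| + C, by positivity, fun x y hx hy => ?_⟩
    obtain ⟨h1, h2⟩ := h x y hx hy
    have hxj : |x j| ≤ |B| := (hx j).trans (le_abs_self _)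
    have hyj : |y j| ≤ |B| := (hy j).trans (le_abs_self _)
    simp only [map_mul, MvPolynomial.eval_X]
    refine ⟨?_, ?_⟩
    · rw [abs_mul]
      have := mul_le_mul h1 hxj (abs_nonneg _) hC
      linarith
    · have h3 : |x j - y j| ≤ ∑ i, |x i - y i| :=
        Finset.single_le_sum (f := fun i => |x i - y i|) (fun i _ => abs_nonneg _)
          (Finset.mem_univ j)
      have h4 : MvPolynomial.eval x p * x j - MvPolynomial.eval y p * y j
          = MvPolynomial.eval x p * (x j - y j)
            + (MvPolynomial.eval x p - MvPolynomial.eval y p) * y j := by ring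
      rw [h4]
      refine (abs_add_le _ _).trans ?_
      rw [abs_mul, abs_mul]
      have h5 := mul_le_mul h1 h3 (abs_nonneg _) hC
      have h6 := mul_le_mul h2 hyj (abs_nonneg _) (mul_nonneg hC (hs x y))
      nlinarith

end mvpoly

end LojasiewiczPart

section final

variable {m n r p : ℕ}

/-- The point of coordinate space given by a pair of factors. -/
def vecUV (U : Matrix (Fin m) (Fin r) ℝ) (V : Matrix (Fin r) (Fin n) ℝ) :
    (Fin m × Fin r) ⊕ (Fin r × Fin n) → ℝ :=
  Sum.elim (fun a => U a.1 a.2) (fun a => V a.1 a.2)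

lemma frobSq_nonneg {a b : ℕ} (X : Matrix (Fin a) (Fin b) ℝ) : 0 ≤ frobSq X :=
  Finset.sum_nonneg fun _ _ => Finset.sum_nonneg fun _ _ => sq_nonneg _

lemma sq_le_frobSq {a b : ℕ} (X : Matrix (Fin a) (Fin b) ℝ) (i : Fin a) (j : Fin b) :
    X i j ^ 2 ≤ frobSq X := by
  unfold frobSq
  refine le_trans ?_ (Finset.single_le_sum (f := fun i => ∑ j, X i j ^ 2)
    (fun i _ => Finset.sum_nonneg fun _ _ => sq_nonneg _) (Finset.mem_univ i))
  exact Finset.single_le_sum (f := fun j => X i j ^ 2) (fun _ _ => sq_nonneg _) (Finset.mem_univ j)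

lemma frobSq_mid {a b : ℕ} (X Y : Matrix (Fin a) (Fin b) ℝ) :
    frobSq ((1 / 2 : ℝ) • (X + Y))
      = (1 / 2) * frobSq X + (1 / 2) * frobSq Y - (1 / 4) * frobSq (X - Y) := by
  unfold frobSq
  simp only [Finset.mul_sum, ← Finset.sum_add_distrib, ← Finset.sum_sub_distrib]
  refine Finset.sum_congr rfl fun i _ => Finset.sum_congr rfl fun j _ => ?_
  simp only [Matrix.smul_apply, Matrix.add_apply, Matrix.sub_apply, smul_eq_mul]
  ring

/-- The data part of the objective. -/
noncomputable def dataF (Ω : Finset (Fin m × Fin n)) (M : Matrix (Fin m) (Fin n) ℝ)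
    (L : Matrix (Fin m) (Fin n) ℝ →ₗ[ℝ] EuclideanSpace ℝ (Fin p))
    (b : EuclideanSpace ℝ (Fin p)) (μ ν : ℝ) (W : Matrix (Fin m) (Fin n) ℝ) : ℝ :=
  (μ / 2) * ∑ ij ∈ Ω, ((W - M) ij.1 ij.2) ^ 2 + (ν / 2) * ‖L W - b‖ ^ 2

variable (Ω : Finset (Fin m × Fin n)) (M : Matrix (Fin m) (Fin n) ℝ)
    (L : Matrix (Fin m) (Fin n) ℝ →ₗ[ℝ] EuclideanSpace ℝ (Fin p))
    (b : EuclideanSpace ℝ (Fin p)) (μ ν : ℝ)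

lemma objF_eq (U : Matrix (Fin m) (Fin r) ℝ) (V : Matrix (Fin r) (Fin n) ℝ) :
    objF Ω M L b μ ν U V = (1 / 2) * (frobSq U + frobSq V) + dataF Ω M L b μ ν (U * V) := by
  unfold objF dataF
  ring

lemma dataF_nonneg (hμ : 0 < μ) (hν : 0 < ν) (W : Matrix (Fin m) (Fin n) ℝ) :
    0 ≤ dataF Ω M L b μ ν W := by
  unfold dataF
  have : 0 ≤ ∑ ij ∈ Ω, ((W - M) ij.1 ij.2) ^ 2 := Finset.sum_nonneg fun _ _ => sq_nonneg _
  positivity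

lemma dataF_mid (hμ : 0 < μ) (hν : 0 < ν) (W W' : Matrix (Fin m) (Fin n) ℝ) :
    dataF Ω M L b μ ν ((1 / 2 : ℝ) • (W + W'))
      ≤ (1 / 2) * dataF Ω M L b μ ν W + (1 / 2) * dataF Ω M L b μ ν W' := by
  have h1 : ∑ ij ∈ Ω, (((1 / 2 : ℝ) • (W + W') - M) ij.1 ij.2) ^ 2
      ≤ (1 / 2) * ∑ ij ∈ Ω, ((W - M) ij.1 ij.2) ^ 2
        + (1 / 2) * ∑ ij ∈ Ω, ((W' - M) ij.1 ij.2) ^ 2 := by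
    simp only [Finset.mul_sum, ← Finset.sum_add_distrib]
    refine Finset.sum_le_sum fun ij _ => ?_
    simp only [Matrix.smul_apply, Matrix.add_apply, Matrix.sub_apply, smul_eq_mul]
    nlinarith [sq_nonneg (W ij.1 ij.2 - W' ij.1 ij.2)]
  have h2 : ‖L ((1 / 2 : ℝ) • (W + W')) - b‖ ^ 2
      ≤ (1 / 2) * ‖L W - b‖ ^ 2 + (1 / 2) * ‖L W' - b‖ ^ 2 := by
    have h3 : L ((1 / 2 : ℝ) • (W + W')) - b = (1 / 2 : ℝ) • ((L W - b) + (L W' - b)) := by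
      rw [map_smul, map_add]
      module
    have h4 : ‖L ((1 / 2 : ℝ) • (W + W')) - b‖ ≤ (1 / 2) * (‖L W - b‖ + ‖L W' - b‖) := by
      rw [h3, norm_smul, Real.norm_of_nonneg (by norm_num)]
      exact mul_le_mul_of_nonneg_left (norm_add_le _ _) (by norm_num)
    have h5 := pow_le_pow_left₀ (norm_nonneg _) h4 2
    nlinarith [sq_nonneg (‖L W - b‖ - ‖L W' - b‖)]
  unfold dataF
  have h3 := mul_le_mul_of_nonneg_left h1 (by positivity : 0 ≤ μ / 2)
  have h4 := mul_le_mul_of_nonneg_left h2 (by positivity : 0 ≤ ν / 2)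
  linarith

lemma growth_U (hμ : 0 < μ) (hν : 0 < ν) (U₀ U₁ : Matrix (Fin m) (Fin r) ℝ)
    (V : Matrix (Fin r) (Fin n) ℝ)
    (hmin : ∀ U', objF Ω M L b μ ν U₁ V ≤ objF Ω M L b μ ν U' V) :
    (1 / 4) * frobSq (U₁ - U₀) ≤ objF Ω M L b μ ν U₀ V - objF Ω M L b μ ν U₁ V := by
  have h1 := hmin ((1 / 2 : ℝ) • (U₁ + U₀))
  have h2 := dataF_mid Ω M L b μ ν hμ hν (U₁ * V) (U₀ * V)
  rw [objF_eq, objF_eq, frobSq_mid, Matrix.smul_mul, Matrix.add_mul] at h1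
  rw [objF_eq, objF_eq]
  linarith

lemma growth_V (hμ : 0 < μ) (hν : 0 < ν) (U : Matrix (Fin m) (Fin r) ℝ)
    (V₀ V₁ : Matrix (Fin r) (Fin n) ℝ)
    (hmin : ∀ V', objF Ω M L b μ ν U V₁ ≤ objF Ω M L b μ ν U V') :
    (1 / 4) * frobSq (V₁ - V₀) ≤ objF Ω M L b μ ν U V₀ - objF Ω M L b μ ν U V₁ := by
  have h1 := hmin ((1 / 2 : ℝ) • (V₁ + V₀))
  have h2 := dataF_mid Ω M L b μ ν hμ hν (U * V₁) (U * V₀)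
  rw [objF_eq, objF_eq, frobSq_mid, Matrix.mul_smul, Matrix.mul_add] at h1
  rw [objF_eq, objF_eq]
  linarith

/-- The objective is a polynomial. -/
lemma objF_poly : ∃ P : MvPolynomial ((Fin m × Fin r) ⊕ (Fin r × Fin n)) ℝ,
    ∀ U V, MvPolynomial.eval (vecUV U V) P = objF Ω M L b μ ν U V := by
  classical
  let W : Fin m → Fin n → MvPolynomial ((Fin m × Fin r) ⊕ (Fin r × Fin n)) ℝ :=
    fun i j => ∑ k, MvPolynomial.X (Sum.inl (i, k)) * MvPolynomial.X (Sum.inr (k, j))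
  have hW : ∀ U V i j, MvPolynomial.eval (vecUV U V) (W i j) = (U * V) i j := by
    intro U V i j
    simp [W, vecUV, Matrix.mul_apply]
  obtain ⟨ℓ, hL⟩ : ∃ ℓ : Fin m → Fin n → Fin p → ℝ, ∀ (X : Matrix (Fin m) (Fin n) ℝ) (c : Fin p),
      (L X) c = ∑ i, ∑ j, X i j * ℓ i j c := by
    refine ⟨fun i j c => (L (Matrix.single i j 1)) c, fun X c => ?_⟩
    conv_lhs => rw [Matrix.matrix_eq_sum_single X]
    simp only [map_sum, WithLp.ofLp_sum, Finset.sum_apply]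
    refine Finset.sum_congr rfl fun i _ => Finset.sum_congr rfl fun j _ => ?_
    rw [show Matrix.single i j (X i j) = (X i j) • Matrix.single i j (1 : ℝ) by
      rw [Matrix.smul_single]; simp, map_smul]
    simp
  refine ⟨MvPolynomial.C (1 / 2) * (∑ i, ∑ k, MvPolynomial.X (Sum.inl (i, k)) ^ 2
      + ∑ k, ∑ j, MvPolynomial.X (Sum.inr (k, j)) ^ 2)
    + MvPolynomial.C (μ / 2) * ∑ ij ∈ Ω, (W ij.1 ij.2 - MvPolynomial.C (M ij.1 ij.2)) ^ 2
    + MvPolynomial.C (ν / 2) * ∑ c, (∑ i, ∑ j, W i j *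
        MvPolynomial.C (ℓ i j c) - MvPolynomial.C (b c)) ^ 2, ?_⟩
  intro U V
  unfold objF frobSq
  rw [EuclideanSpace.real_norm_sq_eq]
  simp only [map_add, map_mul, map_sum, map_pow, map_sub, MvPolynomial.eval_C,
    MvPolynomial.eval_X, hW, PiLp.sub_apply, hL, Matrix.sub_apply]
  rfl

lemma vecUV_update_inl (U : Matrix (Fin m) (Fin r) ℝ) (V : Matrix (Fin r) (Fin n) ℝ)
    (a : Fin m × Fin r) (t : ℝ) :
    ∃ U' : Matrix (Fin m) (Fin r) ℝ, Function.update (vecUV U V) (Sum.inl a) t = vecUV U' V := by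
  refine ⟨fun i j => Function.update (fun a : Fin m × Fin r => U a.1 a.2) a t (i, j), ?_⟩
  unfold vecUV
  rw [Sum.update_elim_inl]

lemma vecUV_update_inr (U : Matrix (Fin m) (Fin r) ℝ) (V : Matrix (Fin r) (Fin n) ℝ)
    (a : Fin r × Fin n) (t : ℝ) :
    ∃ V' : Matrix (Fin r) (Fin n) ℝ, Function.update (vecUV U V) (Sum.inr a) t = vecUV U V' := by
  refine ⟨fun i j => Function.update (fun a : Fin r × Fin n => V a.1 a.2) a t (i, j), ?_⟩
  unfold vecUV
  rw [Sum.update_elim_inr]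

lemma pderiv_eq_zero_of_min {σ : Type*} [Fintype σ] [DecidableEq σ] (P : MvPolynomial σ ℝ)
    (x : σ → ℝ) (i : σ)
    (h : ∀ t, MvPolynomial.eval x P ≤ MvPolynomial.eval (Function.update x i t) P) :
    MvPolynomial.eval x (MvPolynomial.pderiv i P) = 0 := by
  refine IsLocalMin.hasDerivAt_eq_zero ?_ (mv_hasDerivAt P x i)
  refine Filter.Eventually.of_forall fun t => ?_
  simpa using h t

end final

/-- Summable convergence of alternating minimization (Proposition 1):
`∑ₖ (‖U^{(k+1)} − U^{(k)}‖_F + ‖V^{(k+1)} − V^{(k)}‖_F) < +∞`. -/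
theorem objF_iterates_summable {m n r p : ℕ} (Ω : Finset (Fin m × Fin n)) (M : Matrix (Fin m) (Fin n) ℝ)
    (L : Matrix (Fin m) (Fin n) ℝ →ₗ[ℝ] EuclideanSpace ℝ (Fin p))
    (b : EuclideanSpace ℝ (Fin p)) (μ ν : ℝ) (hμ : 0 < μ) (hν : 0 < ν)
    (U : ℕ → Matrix (Fin m) (Fin r) ℝ) (V : ℕ → Matrix (Fin r) (Fin n) ℝ)
    (hUstep : ∀ (k : ℕ) (U' : Matrix (Fin m) (Fin r) ℝ),
      objF Ω M L b μ ν (U (k + 1)) (V k) ≤ objF Ω M L b μ ν U' (V k))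
    (hVstep : ∀ (k : ℕ) (V' : Matrix (Fin r) (Fin n) ℝ),
      objF Ω M L b μ ν (U (k + 1)) (V (k + 1)) ≤ objF Ω M L b μ ν (U (k + 1)) V') :
    Summable (fun k : ℕ =>
      Real.sqrt (frobSq (U (k + 1) - U k)) + Real.sqrt (frobSq (V (k + 1) - V k))) := by
  classical
  obtain ⟨P, hP⟩ := objF_poly (r := r) Ω M L b μ ν
  set F : ℕ → ℝ := fun k => objF Ω M L b μ ν (U k) (V k) with hF
  have hdescF : ∀ k, (1 / 4) * (frobSq (U (k + 1) - U k) + frobSq (V (k + 1) - V k))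
      ≤ F k - F (k + 1) := by
    intro k
    have h1 := growth_U Ω M L b μ ν hμ hν (U k) (U (k + 1)) (V k) (hUstep k)
    have h2 := growth_V Ω M L b μ ν hμ hν (U (k + 1)) (V k) (V (k + 1)) (hVstep k)
    simp only [hF]
    linarith
  have hanti : Antitone F := antitone_nat_of_succ_le fun k => by
    have h1 := hdescF k
    have h2 := frobSq_nonneg (U (k + 1) - U k)
    have h3 := frobSq_nonneg (V (k + 1) - V k)
    linarith
  have hFlow : ∀ k, (1 / 2) * (frobSq (U k) + frobSq (V k)) ≤ F k := by
    intro k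
    have h1 := dataF_nonneg Ω M L b μ ν hμ hν (U k * V k)
    simp only [hF]
    rw [objF_eq]
    linarith
  have hF0 : ∀ k, 0 ≤ F k := fun k => by
    have h1 := hFlow k
    have h2 := frobSq_nonneg (U k)
    have h3 := frobSq_nonneg (V k)
    linarith
  have hbdd : BddBelow (Set.range F) := ⟨0, by rintro _ ⟨k, rfl⟩; exact hF0 k⟩
  set Fs := ⨅ k, F k with hFs
  have hlim : Filter.Tendsto F Filter.atTop (nhds Fs) := tendsto_atTop_ciInf hanti hbdd
  set B := Real.sqrt (2 * F 0) with hB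
  have hUB : ∀ k i j, |U k i j| ≤ B := by
    intro k i j
    apply Real.abs_le_sqrt
    have h1 := hFlow k
    have h2 := sq_le_frobSq (U k) i j
    have h3 := frobSq_nonneg (V k)
    have h4 := hanti (Nat.zero_le k)
    linarith
  have hVB : ∀ k i j, |V k i j| ≤ B := by
    intro k i j
    apply Real.abs_le_sqrt
    have h1 := hFlow k
    have h2 := sq_le_frobSq (V k) i j
    have h3 := frobSq_nonneg (U k)
    have h4 := hanti (Nat.zero_le k)
    linarith
  have hxB : ∀ k l i, |vecUV (U k) (V l) i| ≤ B := by
    rintro k l (i | i)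
    · exact hUB k _ _
    · exact hVB l _ _
  obtain ⟨θ, hθ0, hθ1, η, hη, hkl⟩ := poly_lojasiewicz (P - MvPolynomial.C Fs) B
  -- uniform Lipschitz constant for the partial derivatives
  choose C₀ hC₀ hLip using fun i => mv_lipschitz (MvPolynomial.pderiv i P) B
  set d : ℕ → ℝ := fun k =>
    Real.sqrt (frobSq (U (k + 1) - U k)) + Real.sqrt (frobSq (V (k + 1) - V k)) with hd
  have hd0 : ∀ k, 0 ≤ d k := fun k => by positivity
  set C := ∑ i, C₀ i * (Fintype.card (Fin r × Fin n) : ℝ) with hC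
  have hterm : ∀ i, 0 ≤ C₀ i * (Fintype.card (Fin r × Fin n) : ℝ) := fun i =>
    mul_nonneg (hC₀ i) (Nat.cast_nonneg _)
  have hC0 : 0 ≤ C := Finset.sum_nonneg fun i _ => hterm i
  have hgrad : ∀ k i, |MvPolynomial.eval (vecUV (U (k + 1)) (V (k + 1)))
      (MvPolynomial.pderiv i P)| ≤ C * d k := by
    rintro k (i | i)
    · have hz : MvPolynomial.eval (vecUV (U (k + 1)) (V k))
          (MvPolynomial.pderiv (Sum.inl i) P) = 0 := by
        apply pderiv_eq_zero_of_min
        intro t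
        obtain ⟨U', hU'⟩ := vecUV_update_inl (U (k + 1)) (V k) i t
        rw [hU', hP, hP]
        exact hUstep k U'
      have h1 := (hLip (Sum.inl i) (vecUV (U (k + 1)) (V (k + 1))) (vecUV (U (k + 1)) (V k))
        (hxB _ _) (hxB _ _)).2
      rw [hz, sub_zero] at h1
      have h2 : ∑ j, |vecUV (U (k + 1)) (V (k + 1)) j - vecUV (U (k + 1)) (V k) j|
          ≤ (Fintype.card (Fin r × Fin n) : ℝ) * d k := by
        rw [Fintype.sum_sum_type]
        simp only [vecUV, Sum.elim_inl, Sum.elim_inr, sub_self, abs_zero, Finset.sum_const_zero,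
          zero_add]
        rw [← nsmul_eq_mul, ← Finset.card_univ]
        apply Finset.sum_le_card_nsmul
        intro a _
        have h3 : |V (k + 1) a.1 a.2 - V k a.1 a.2| ≤ Real.sqrt (frobSq (V (k + 1) - V k)) :=
          Real.abs_le_sqrt (sq_le_frobSq (V (k + 1) - V k) a.1 a.2)
        have h4 := Real.sqrt_nonneg (frobSq (U (k + 1) - U k))
        simp only [hd]
        linarith
      have h3 := mul_le_mul_of_nonneg_left h2 (hC₀ (Sum.inl i))
      have h4 : C₀ (Sum.inl i) * (Fintype.card (Fin r × Fin n) : ℝ) ≤ C :=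
        Finset.single_le_sum (f := fun i => C₀ i * (Fintype.card (Fin r × Fin n) : ℝ))
          (fun i _ => hterm i) (Finset.mem_univ (Sum.inl i))
      have h5 := mul_le_mul_of_nonneg_right h4 (hd0 k)
      linarith
    · have hz : MvPolynomial.eval (vecUV (U (k + 1)) (V (k + 1)))
          (MvPolynomial.pderiv (Sum.inr i) P) = 0 := by
        apply pderiv_eq_zero_of_min
        intro t
        obtain ⟨V', hV'⟩ := vecUV_update_inr (U (k + 1)) (V (k + 1)) i t
        rw [hV', hP, hP]
        exact hVstep k V'
      rw [hz, abs_zero]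
      exact mul_nonneg hC0 (hd0 k)
  have hev : ∀ᶠ k in Filter.atTop, F k < Fs + η := hlim.eventually_lt_const (by linarith)
  obtain ⟨K, hK⟩ := Filter.eventually_atTop.1 hev
  have hFge : ∀ k, Fs ≤ F k := fun k => ciInf_le hbdd k
  refine summable_of_kl (fun k => F k - Fs) d θ (1 / 8) C hθ0 hθ1 (by norm_num) hd0
    (fun k => sub_nonneg.2 (hFge k)) ?_ K ?_
  · intro k
    have h1 := hdescF k
    have h2 := Real.sq_sqrt (frobSq_nonneg (U (k + 1) - U k))
    have h3 := Real.sq_sqrt (frobSq_nonneg (V (k + 1) - V k))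
    have h4 := sq_nonneg (Real.sqrt (frobSq (U (k + 1) - U k))
      - Real.sqrt (frobSq (V (k + 1) - V k)))
    simp only [hd]
    nlinarith
  · intro k hk hpos
    have hval : MvPolynomial.eval (vecUV (U (k + 1)) (V (k + 1))) (P - MvPolynomial.C Fs)
        = F (k + 1) - Fs := by
      rw [map_sub, hP, MvPolynomial.eval_C]
    have habs : |MvPolynomial.eval (vecUV (U (k + 1)) (V (k + 1))) (P - MvPolynomial.C Fs)|
        = F (k + 1) - Fs := by
      rw [hval, abs_of_pos hpos]
    obtain ⟨i, hi⟩ := hkl (vecUV (U (k + 1)) (V (k + 1))) (hxB _ _) (by rw [habs]; exact hpos)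
      (by rw [habs]; have := hK (k + 1) (by omega); linarith)
    rw [habs, map_sub, MvPolynomial.pderiv_C, sub_zero] at hi
    exact hi.trans (hgrad k i)
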